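/- Let m ∈ {0,1} and p ∈ [1,∞], or m ≥ 2 an integer and p ∈ (1,∞], let α > 0, and set γ = max(0, m − 1/p). There are constants c, C > 0, depending only on f, D, m, p and α, such that for every ν ∈ (0,1], the time average over [T₁,T₂] satisfies c ν^{−γ} ≤ { |u(t)|_{m,p}^α }^{1/α} ≤ C ν^{−γ}. -/

import Mathlib

open MeasureTheory Set
open scoped ENNReal

/-- The `L^p` norm (on the circle, i.e. over one period `(0,1]`) of the `m`-th
derivative of a function `v : ℝ → ℝ` (identified with a function on `S¹ = ℝ/ℤ`). -/
noncomputable def sobLp (m : ℕ) (p : ℝ≥0∞) (v : ℝ → ℝ) : ℝ :=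
  (eLpNorm (iteratedDeriv m v) p (volume.restrict (Ioc (0:ℝ) 1))).toReal

/-- `u` is a smooth, space-periodic, zero-mean-value solution of the generalised
Burgers equation `u_t + f'(u) u_x - ν u_xx = 0` with strongly convex `f` and
nonzero initial condition. -/
structure IsBurgersSolution (f : ℝ → ℝ) (σ ν : ℝ) (u : ℝ → ℝ → ℝ) : Prop where
  hf : ContDiff ℝ (⊤ : ℕ∞) f
  hσ : 0 < σ
  hconv : ∀ y, σ ≤ iteratedDeriv 2 f y
  hν : 0 < ν
  hu : ContDiffOn ℝ (⊤ : ℕ∞) (Function.uncurry u) (Ici (0:ℝ) ×ˢ univ)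
  hper : ∀ t x, u t (x + 1) = u t x
  hpde : ∀ t, 0 < t → ∀ x,
    deriv (fun s => u s x) t + deriv f (u t x) * deriv (u t) x
      - ν * deriv (deriv (u t)) x = 0
  hmean : ∀ t, 0 ≤ t → ∫ x in Ioc (0:ℝ) 1, u t x = 0
  hinit : ∃ x, u 0 x ≠ 0

/-- The quantity `D = max(|u₀|₁⁻¹, |u₀|_{1,∞})`. -/
noncomputable def burgersD (u : ℝ → ℝ → ℝ) : ℝ :=
  max (sobLp 0 1 (u 0))⁻¹ (sobLp 1 ⊤ (u 0))

/-- `T₁ = D⁻² C̃⁻¹ / 4`. -/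
noncomputable def burgersT₁ (D Ct : ℝ) : ℝ := (D ^ 2)⁻¹ * Ct⁻¹ / 4

/-- `T₂ = max(3T₁/2, 2Dσ⁻¹)`. -/
noncomputable def burgersT₂ (σ D Ct : ℝ) : ℝ :=
  max (3 / 2 * burgersT₁ D Ct) (2 * D * σ⁻¹)

/-- Time average over `[T₁, T₂]`. -/
noncomputable def timeAvg (T₁ T₂ : ℝ) (A : ℝ → ℝ) : ℝ :=
  (T₂ - T₁)⁻¹ * ∫ t in T₁..T₂, A t

/-- The structure function `S_p(ℓ)`. -/
noncomputable def structFun (T₁ T₂ : ℝ) (u : ℝ → ℝ → ℝ) (p ℓ : ℝ) : ℝ :=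
  timeAvg T₁ T₂ (fun t => ∫ x in Ioc (0:ℝ) 1, |u t (x + ℓ) - u t x| ^ p)


/-! ### Part A: smoothness and partial derivatives -/

/-- The open half-plane of positive times. -/
def Om : Set (ℝ × ℝ) := Ioi (0:ℝ) ×ˢ (univ : Set ℝ)

lemma isOpen_Om : IsOpen Om := isOpen_Ioi.prod isOpen_univ

lemma mem_Om {t x : ℝ} (ht : 0 < t) : (t, x) ∈ Om := ⟨ht, mem_univ _⟩

/-- Joint smoothness for positive times. -/
def SmoothPos (u : ℝ → ℝ → ℝ) : Prop :=
  ContDiffOn ℝ (⊤ : ℕ∞) (Function.uncurry u) Om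

/-- Space derivative. -/
noncomputable def dX (u : ℝ → ℝ → ℝ) : ℝ → ℝ → ℝ := fun t x => deriv (u t) x

/-- Time derivative. -/
noncomputable def dT (u : ℝ → ℝ → ℝ) : ℝ → ℝ → ℝ := fun t x => deriv (fun s => u s x) t

lemma SmoothPos.contDiffAt {u : ℝ → ℝ → ℝ} (h : SmoothPos u) {t : ℝ} (ht : 0 < t) (x : ℝ) :
    ContDiffAt ℝ (⊤ : ℕ∞) (Function.uncurry u) (t, x) :=
  ContDiffOn.contDiffAt h (isOpen_Om.mem_nhds (mem_Om ht))

lemma SmoothPos.hasFDerivAt {u : ℝ → ℝ → ℝ} (h : SmoothPos u) {t : ℝ} (ht : 0 < t) (x : ℝ) :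
    HasFDerivAt (Function.uncurry u) (fderiv ℝ (Function.uncurry u) (t, x)) (t, x) :=
  ((h.contDiffAt ht x).differentiableAt (by simp)).hasFDerivAt

lemma SmoothPos.hasDerivAt_x {u : ℝ → ℝ → ℝ} (h : SmoothPos u) {t : ℝ} (ht : 0 < t) (x : ℝ) :
    HasDerivAt (u t) (fderiv ℝ (Function.uncurry u) (t, x) (0, 1)) x := by
  have h1 : HasDerivAt (fun y : ℝ => (t, y)) ((0:ℝ), (1:ℝ)) x :=
    (hasDerivAt_const x t).prodMk (hasDerivAt_id x)
  exact (h.hasFDerivAt ht x).comp_hasDerivAt x h1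

lemma SmoothPos.hasDerivAt_t {u : ℝ → ℝ → ℝ} (h : SmoothPos u) {t : ℝ} (ht : 0 < t) (x : ℝ) :
    HasDerivAt (fun s => u s x) (fderiv ℝ (Function.uncurry u) (t, x) (1, 0)) t := by
  have h1 : HasDerivAt (fun s : ℝ => (s, x)) ((1:ℝ), (0:ℝ)) t :=
    (hasDerivAt_id t).prodMk (hasDerivAt_const t x)
  exact (h.hasFDerivAt ht x).comp_hasDerivAt t h1

lemma SmoothPos.hasDerivAt_dX {u : ℝ → ℝ → ℝ} (h : SmoothPos u) {t : ℝ} (ht : 0 < t) (x : ℝ) :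
    HasDerivAt (u t) (dX u t x) x :=
  (h.hasDerivAt_x ht x).differentiableAt.hasDerivAt

lemma SmoothPos.hasDerivAt_dT {u : ℝ → ℝ → ℝ} (h : SmoothPos u) {t : ℝ} (ht : 0 < t) (x : ℝ) :
    HasDerivAt (fun s => u s x) (dT u t x) t :=
  (h.hasDerivAt_t ht x).differentiableAt.hasDerivAt

lemma SmoothPos.dX_eq {u : ℝ → ℝ → ℝ} (h : SmoothPos u) {t : ℝ} (ht : 0 < t) (x : ℝ) :
    dX u t x = fderiv ℝ (Function.uncurry u) (t, x) (0, 1) := (h.hasDerivAt_x ht x).deriv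

lemma SmoothPos.dT_eq {u : ℝ → ℝ → ℝ} (h : SmoothPos u) {t : ℝ} (ht : 0 < t) (x : ℝ) :
    dT u t x = fderiv ℝ (Function.uncurry u) (t, x) (1, 0) := (h.hasDerivAt_t ht x).deriv

lemma SmoothPos.fderiv_apply {u : ℝ → ℝ → ℝ} (h : SmoothPos u) (v : ℝ × ℝ) :
    ContDiffOn ℝ (⊤ : ℕ∞) (fun z => fderiv ℝ (Function.uncurry u) z v) Om := by
  have h1 : ContDiffOn ℝ (⊤ : ℕ∞) (fderiv ℝ (Function.uncurry u)) Om :=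
    ContDiffOn.fderiv_of_isOpen h isOpen_Om (by simp)
  exact h1.clm_apply contDiffOn_const

lemma SmoothPos.dX {u : ℝ → ℝ → ℝ} (h : SmoothPos u) : SmoothPos (dX u) := by
  refine (h.fderiv_apply (0, 1)).congr ?_
  rintro ⟨t, x⟩ ⟨ht, -⟩
  exact h.dX_eq ht x

lemma SmoothPos.dT {u : ℝ → ℝ → ℝ} (h : SmoothPos u) : SmoothPos (dT u) := by
  refine (h.fderiv_apply (1, 0)).congr ?_
  rintro ⟨t, x⟩ ⟨ht, -⟩
  exact h.dT_eq ht x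

lemma SmoothPos.slice {u : ℝ → ℝ → ℝ} (h : SmoothPos u) {t : ℝ} (ht : 0 < t) :
    ContDiff ℝ (⊤ : ℕ∞) (u t) := by
  rw [contDiff_iff_contDiffAt]
  intro x
  have h1 : ContDiffAt ℝ (⊤ : ℕ∞) (fun y : ℝ => (t, y)) x :=
    contDiffAt_const.prodMk contDiffAt_id
  exact ContDiffAt.comp (g := Function.uncurry u) x (h.contDiffAt ht x) h1

lemma SmoothPos.comm {u : ℝ → ℝ → ℝ} (h : SmoothPos u) {t : ℝ} (ht : 0 < t) (x : ℝ) :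
    _root_.dT (_root_.dX u) t x = _root_.dX (_root_.dT u) t x := by
  have hd : DifferentiableAt ℝ (fderiv ℝ (Function.uncurry u)) (t, x) :=
    ((h.contDiffAt ht x).fderiv_right (m := 1) (by
      norm_cast; )).differentiableAt (by simp)
  have key : ∀ v w : ℝ × ℝ, fderiv ℝ (fun z => fderiv ℝ (Function.uncurry u) z v) (t, x) w
      = fderiv ℝ (fderiv ℝ (Function.uncurry u)) (t, x) w v := by
    intro v w
    rw [fderiv_clm_apply hd (differentiableAt_const v)]
    simp
  have e1 : Function.uncurry (_root_.dX u) =ᶠ[nhds (t, x)]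
      fun z => fderiv ℝ (Function.uncurry u) z (0, 1) := by
    filter_upwards [isOpen_Om.mem_nhds (mem_Om (x := x) ht)] with z hz
    exact h.dX_eq hz.1 z.2
  have e2 : Function.uncurry (_root_.dT u) =ᶠ[nhds (t, x)]
      fun z => fderiv ℝ (Function.uncurry u) z (1, 0) := by
    filter_upwards [isOpen_Om.mem_nhds (mem_Om (x := x) ht)] with z hz
    exact h.dT_eq hz.1 z.2
  rw [h.dX.dT_eq ht, h.dT.dX_eq ht, e1.fderiv_eq, e2.fderiv_eq, key, key]
  exact (h.contDiffAt ht x).isSymmSndFDerivAt (by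
    simp only [minSmoothness_of_isRCLikeNormedField]
    exact WithTop.coe_le_coe.2 (le_top : (2 : ℕ∞) ≤ ⊤)) _ _

/-- iterated space derivatives -/
noncomputable def dXn (u : ℝ → ℝ → ℝ) (j : ℕ) : ℝ → ℝ → ℝ := fun t x => iteratedDeriv j (u t) x

lemma dXn_zero (u : ℝ → ℝ → ℝ) : dXn u 0 = u := by
  funext t x; simp [dXn]

lemma dXn_succ (u : ℝ → ℝ → ℝ) (j : ℕ) : dXn u (j+1) = dX (dXn u j) := by
  funext t x
  unfold dXn dX
  rw [iteratedDeriv_succ]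

lemma dXn_one (u : ℝ → ℝ → ℝ) : dXn u 1 = dX u := by
  rw [dXn_succ, dXn_zero]

lemma SmoothPos.dXn {u : ℝ → ℝ → ℝ} (h : SmoothPos u) (j : ℕ) : SmoothPos (dXn u j) := by
  induction j with
  | zero => rwa [dXn_zero]
  | succ j ih => rw [dXn_succ]; exact ih.dX

lemma SmoothPos.dT_dXn {u : ℝ → ℝ → ℝ} (h : SmoothPos u) (j : ℕ) {t : ℝ} (ht : 0 < t) (x : ℝ) :
    _root_.dT (_root_.dXn u j) t x = iteratedDeriv j (_root_.dT u t) x := by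
  induction j generalizing x with
  | zero => simp [dXn_zero]
  | succ j ih =>
    rw [dXn_succ, (h.dXn j).comm ht, iteratedDeriv_succ]
    unfold _root_.dX
    congr 1
    funext y
    exact ih y

lemma SmoothPos.continuousOn {u : ℝ → ℝ → ℝ} (h : SmoothPos u) :
    ContinuousOn (Function.uncurry u) Om := ContDiffOn.continuousOn h

/-! ### Part B: maximum principle -/

lemma localMax_second {g g1 : ℝ → ℝ} {c x0 : ℝ} (h1 : ∀ x, HasDerivAt g (g1 x) x)
    (h2 : HasDerivAt g1 c x0) (hm : IsLocalMax g x0) : g1 x0 = 0 ∧ c ≤ 0 := by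
  have hz : g1 x0 = 0 := hm.hasDerivAt_eq_zero (h1 x0)
  refine ⟨hz, ?_⟩
  by_contra hc
  push Not at hc
  have hd : deriv g = g1 := funext fun x => (h1 x).deriv
  have hmin : IsLocalMin g x0 := by
    apply isLocalMin_of_deriv_deriv_pos
    · rw [hd, h2.deriv]; exact hc
    · rw [hd, hz]
    · exact (h1 x0).continuousAt
  have hconst : g =ᶠ[nhds x0] fun _ => g x0 := by
    filter_upwards [hm, hmin] with x ha hb
    exact le_antisymm ha hb
  have : g1 =ᶠ[nhds x0] fun _ => 0 := by
    have := hconst.deriv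
    rw [hd] at this
    simpa using this
  have h3 := this.deriv_eq
  rw [h2.deriv] at h3
  simp at h3
  linarith

lemma periodic_to_unit {L : ℝ} (hL : 0 < L) {g : ℝ → ℝ} (hp : ∀ x, g (x + L) = g x) (x : ℝ) :
    ∃ y ∈ Icc 0 L, g x = g y := by
  have hp' : Function.Periodic g L := hp
  obtain ⟨y, hy, h⟩ := hp'.exists_mem_Ico₀ hL x
  exact ⟨y, Ico_subset_Icc_self hy, h⟩

/-- Maximum principle for periodic functions. -/
lemma max_principle {L t0 t1 K : ℝ} (hL : 0 < L) (φ φt φx φxx : ℝ → ℝ → ℝ)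
    (hcont : ContinuousOn (Function.uncurry φ) (Icc t0 t1 ×ˢ univ))
    (hper : ∀ t ∈ Icc t0 t1, ∀ x, φ t (x + L) = φ t x)
    (ht : ∀ t ∈ Ioc t0 t1, ∀ x, HasDerivAt (fun s => φ s x) (φt t x) t)
    (hx : ∀ t ∈ Ioc t0 t1, ∀ x, HasDerivAt (φ t) (φx t x) x)
    (hxx : ∀ t ∈ Ioc t0 t1, ∀ x, HasDerivAt (φx t) (φxx t x) x)
    (hineq : ∀ t ∈ Ioc t0 t1, ∀ x, K < φ t x → φx t x = 0 → φxx t x ≤ 0 → φt t x ≤ 0)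
    (hinit : ∀ x, φ t0 x ≤ K) :
    ∀ t ∈ Icc t0 t1, ∀ x, φ t x ≤ K := by
  intro τ hτ ξ
  by_contra hcon
  push Not at hcon
  have h01 : t0 ≤ t1 := hτ.1.trans hτ.2
  obtain ⟨ε, hε, hε2⟩ : ∃ ε > 0, K < φ τ ξ - ε * (τ - t0) := by
    refine ⟨(φ τ ξ - K) / (2 * (τ - t0 + 1)), ?_, ?_⟩
    · apply div_pos (by linarith); linarith [hτ.1]
    · have h1 : 0 < τ - t0 + 1 := by linarith [hτ.1]
      have h2 : (φ τ ξ - K) / (2 * (τ - t0 + 1)) * (τ - t0) < φ τ ξ - K := by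
        rw [div_mul_eq_mul_div, div_lt_iff₀ (by linarith)]
        nlinarith [hτ.1]
      linarith
  have hcomp : IsCompact (Icc t0 t1 ×ˢ Icc 0 L) := isCompact_Icc.prod isCompact_Icc
  have hψ : ContinuousOn (fun z : ℝ × ℝ => φ z.1 z.2 - ε * (z.1 - t0)) (Icc t0 t1 ×ˢ Icc 0 L) := by
    apply ContinuousOn.sub
    · exact hcont.mono (prod_mono_right (subset_univ _))
    · fun_prop
  obtain ⟨⟨ts, xs⟩, hmem, hmax⟩ := hcomp.exists_isMaxOn
    ⟨(t0, 0), ⟨⟨le_refl _, h01⟩, ⟨le_refl _, hL.le⟩⟩⟩ hψ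
  have hmax2 : ∀ t ∈ Icc t0 t1, ∀ x, φ t x - ε * (t - t0) ≤ φ ts xs - ε * (ts - t0) := by
    intro t ht x
    obtain ⟨y, hy, hxy⟩ := periodic_to_unit hL (hper t ht) x
    rw [hxy]
    exact hmax (show (t, y) ∈ Icc t0 t1 ×ˢ Icc 0 L from ⟨ht, hy⟩)
  have hts : ts ∈ Icc t0 t1 := hmem.1
  have hbig : K < φ ts xs - ε * (ts - t0) := hε2.trans_le (hmax2 τ hτ ξ)
  have hts0 : t0 < ts := by
    rcases hts.1.lt_or_eq with h | h
    · exact h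
    · exfalso
      subst h
      have := hinit xs
      linarith
  have htsI : ts ∈ Ioc t0 t1 := ⟨hts0, hts.2⟩
  have hKφ : K < φ ts xs := by
    have : 0 ≤ ε * (ts - t0) := mul_nonneg hε.le (by linarith)
    linarith
  have hlm : IsLocalMax (φ ts) xs := by
    apply Filter.Eventually.of_forall
    intro x
    have := hmax2 ts hts x
    linarith
  obtain ⟨hx0, hxx0⟩ := localMax_second (hx ts htsI) (hxx ts htsI xs) hlm
  have h1 := hineq ts htsI xs hKφ hx0 hxx0
  have hdt := ht ts htsI xs
  have hslope := (hasDerivAt_iff_tendsto_slope.1 hdt).mono_left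
    (nhdsWithin_mono ts (show Iio ts ⊆ {ts}ᶜ from fun y hy => ne_of_lt hy))
  have : ε ≤ φt ts xs := by
    refine ge_of_tendsto hslope ?_
    filter_upwards [Ioo_mem_nhdsLT hts0] with s hs
    have hs' := hmax2 s ⟨hs.1.le, hs.2.le.trans hts.2⟩ xs
    rw [slope_def_field, le_div_iff_of_neg (by linarith [hs.2])]
    linarith
  linarith

/-! ### Part C: bounds on derivatives of compositions -/

lemma natLeTop (n : ℕ) : ((n : ℕ∞) : WithTop ℕ∞) ≤ ((⊤ : ℕ∞) : WithTop ℕ∞) :=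
  WithTop.coe_le_coe.2 le_top

lemma smooth_deriv {F : ℝ → ℝ} (hF : ContDiff ℝ (⊤ : ℕ∞) F) : ContDiff ℝ (⊤ : ℕ∞) (deriv F) := by
  have := hF.iterate_deriv 1
  simpa using this

lemma smooth_iteratedDeriv {F : ℝ → ℝ} (hF : ContDiff ℝ (⊤ : ℕ∞) F) (n : ℕ) :
    ContDiff ℝ (⊤ : ℕ∞) (iteratedDeriv n F) := by
  rw [iteratedDeriv_eq_iterate]
  exact hF.iterate_deriv n

lemma smooth_hasDerivAt_iter {F : ℝ → ℝ} (hF : ContDiff ℝ (⊤ : ℕ∞) F) (n : ℕ) (x : ℝ) :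
    HasDerivAt (iteratedDeriv n F) (iteratedDeriv (n+1) F x) x := by
  rw [iteratedDeriv_succ]
  exact ((smooth_iteratedDeriv hF n).differentiable (by simp) x).hasDerivAt

lemma bdd_on_compact {F : ℝ → ℝ} (hF : Continuous F) (B : ℝ) :
    ∃ C, 0 ≤ C ∧ ∀ y, |y| ≤ B → |F y| ≤ C := by
  obtain ⟨C, hC⟩ := (isCompact_Icc (a := -B) (b := B)).exists_bound_of_continuousOn hF.continuousOn
  refine ⟨max C 0, le_max_right _ _, fun y hy => ?_⟩
  exact (hC y (abs_le.1 hy)).trans (le_max_left _ _)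

lemma comp_bound {F : ℝ → ℝ} (hF : ContDiff ℝ (⊤ : ℕ∞) F) (n : ℕ) (B : ℝ) :
    ∃ C, 0 ≤ C ∧ ∀ g : ℝ → ℝ, ContDiff ℝ (⊤ : ℕ∞) g → ∀ x,
      (∀ i ≤ n, |iteratedDeriv i g x| ≤ B) → |iteratedDeriv n (fun y => F (g y)) x| ≤ C := by
  have h1 : ∀ i : ℕ, ∃ C, 0 ≤ C ∧ ∀ y, |y| ≤ B → |iteratedDeriv i F y| ≤ C := fun i =>
    bdd_on_compact (smooth_iteratedDeriv hF i).continuous B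
  choose c hc0 hc using h1
  set S := ∑ i ∈ Finset.range (n+1), c i with hS
  have hS0 : 0 ≤ S := Finset.sum_nonneg fun i _ => hc0 i
  refine ⟨n.factorial * S * (max 1 B) ^ n, by positivity, ?_⟩
  intro g hg x hb
  have := norm_iteratedFDeriv_comp_le (n := n) hF hg (natLeTop n) x (C := S) (D := max 1 B) ?_ ?_
  · rw [norm_iteratedFDeriv_eq_norm_iteratedDeriv] at this
    exact this
  · intro i hi
    rw [norm_iteratedFDeriv_eq_norm_iteratedDeriv]
    have h0 := hb 0 (Nat.zero_le _)
    rw [iteratedDeriv_zero] at h0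
    refine (hc i (g x) h0).trans ?_
    exact Finset.single_le_sum (f := c) (fun i _ => hc0 i) (Finset.mem_range.2 (by omega))
  · intro i hi1 hi
    rw [norm_iteratedFDeriv_eq_norm_iteratedDeriv]
    refine (hb i hi).trans ((le_max_right 1 B).trans ?_)
    exact le_self_pow₀ (le_max_left _ _) (by omega)

lemma leibniz_chain {F g : ℝ → ℝ} (hF : ContDiff ℝ (⊤ : ℕ∞) F) (hg : ContDiff ℝ (⊤ : ℕ∞) g)
    (n : ℕ) (x : ℝ) :
    iteratedDeriv n (fun y => F (g y) * deriv g y) x =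
      ∑ i ∈ Finset.range (n+1), (n.choose i : ℝ) * iteratedDeriv i (fun y => F (g y)) x
        * iteratedDeriv (n - i + 1) g x := by
  have hc : ContDiff ℝ (⊤ : ℕ∞) (fun y => F (g y)) := hF.comp hg
  rw [iteratedDeriv_fun_mul (hc.of_le (natLeTop n)).contDiffAt
    ((smooth_deriv hg).of_le (natLeTop n)).contDiffAt]
  simp only [← iteratedDeriv_succ']

lemma comp_bound_top {F : ℝ → ℝ} (hF : ContDiff ℝ (⊤ : ℕ∞) F) (n : ℕ) (B : ℝ) (hB : 0 ≤ B) :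
    ∃ C, 0 ≤ C ∧ ∀ g : ℝ → ℝ, ContDiff ℝ (⊤ : ℕ∞) g → ∀ x,
      (∀ i ≤ n, |iteratedDeriv i g x| ≤ B) →
      |iteratedDeriv (n+1) (fun y => F (g y)) x| ≤ C * (1 + |iteratedDeriv (n+1) g x|) := by
  choose c hc0 hc using fun i => comp_bound (smooth_deriv hF) i B
  refine ⟨∑ i ∈ Finset.range (n+1), (n.choose i : ℝ) * c i * (B + 1), ?_, ?_⟩
  · exact Finset.sum_nonneg fun i _ => mul_nonneg (mul_nonneg (by positivity) (hc0 i)) (by linarith)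
  intro g hg x hb
  have e : deriv (fun y => F (g y)) = fun y => deriv F (g y) * deriv g y := by
    funext y
    exact ((hF.differentiable (by simp) (g y)).hasDerivAt.comp y
      (hg.differentiable (by simp) y).hasDerivAt).deriv
  rw [iteratedDeriv_succ', e, leibniz_chain (smooth_deriv hF) hg, Finset.sum_mul]
  refine (Finset.abs_sum_le_sum_abs _ _).trans (Finset.sum_le_sum fun i hi => ?_)
  rw [Finset.mem_range] at hi
  rw [abs_mul, abs_mul, Nat.abs_cast, mul_assoc, mul_assoc, mul_assoc]
  refine mul_le_mul_of_nonneg_left ?_ (by positivity)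
  have h1 := hc i g hg x (fun k hk => hb k (by omega))
  have h2 : |iteratedDeriv (n - i + 1) g x| ≤ (B + 1) * (1 + |iteratedDeriv (n+1) g x|) := by
    rcases Nat.eq_zero_or_pos i with h | h
    · subst h
      simp only [Nat.sub_zero]
      nlinarith [abs_nonneg (iteratedDeriv (n+1) g x)]
    · have := hb (n - i + 1) (by omega)
      nlinarith [abs_nonneg (iteratedDeriv (n+1) g x)]
  exact mul_le_mul h1 h2 (abs_nonneg _) (hc0 i)

lemma remainder_eq {F g : ℝ → ℝ} (hF : ContDiff ℝ (⊤ : ℕ∞) F) (hg : ContDiff ℝ (⊤ : ℕ∞) g)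
    (j : ℕ) (x : ℝ) :
    iteratedDeriv j (fun y => F (g y) * deriv g y) x - F (g x) * iteratedDeriv (j+1) g x =
      ∑ i ∈ Finset.range j, (j.choose (i+1) : ℝ) * iteratedDeriv (i+1) (fun y => F (g y)) x
        * iteratedDeriv (j - (i+1) + 1) g x := by
  rw [leibniz_chain hF hg, Finset.sum_range_succ']
  simp

lemma remainder_bound {F : ℝ → ℝ} (hF : ContDiff ℝ (⊤ : ℕ∞) F) (j : ℕ) (B : ℝ) (hB : 0 ≤ B) :
    ∃ C, 0 ≤ C ∧ ∀ g : ℝ → ℝ, ContDiff ℝ (⊤ : ℕ∞) g → ∀ x,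
      (∀ i ≤ j, |iteratedDeriv i g x| ≤ B) →
      |iteratedDeriv j (fun y => F (g y) * deriv g y) x - F (g x) * iteratedDeriv (j+1) g x|
        ≤ C := by
  choose c hc0 hc using fun i => comp_bound hF i B
  refine ⟨∑ i ∈ Finset.range j, (j.choose (i+1) : ℝ) * c (i+1) * B, ?_, ?_⟩
  · exact Finset.sum_nonneg fun i _ => mul_nonneg (mul_nonneg (by positivity) (hc0 _)) hB
  intro g hg x hb
  rw [remainder_eq hF hg]
  refine (Finset.abs_sum_le_sum_abs _ _).trans (Finset.sum_le_sum fun i hi => ?_)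
  rw [Finset.mem_range] at hi
  rw [abs_mul, abs_mul, Nat.abs_cast, mul_assoc, mul_assoc]
  refine mul_le_mul_of_nonneg_left ?_ (by positivity)
  exact mul_le_mul (hc _ g hg x (fun k hk => hb k (by omega))) (hb _ (by omega))
    (abs_nonneg _) (hc0 _)

lemma remainder_bound_lin {F : ℝ → ℝ} (hF : ContDiff ℝ (⊤ : ℕ∞) F) (j : ℕ) (hj : 1 ≤ j) (B : ℝ)
    (hB : 0 ≤ B) :
    ∃ C, 0 ≤ C ∧ ∀ g : ℝ → ℝ, ContDiff ℝ (⊤ : ℕ∞) g → ∀ x,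
      (∀ i ≤ j, |iteratedDeriv i g x| ≤ B) →
      |iteratedDeriv (j+1) (fun y => F (g y) * deriv g y) x - F (g x) * iteratedDeriv (j+2) g x|
        ≤ C * (1 + |iteratedDeriv (j+1) g x|) := by
  choose c hc0 hc using fun i => comp_bound_top hF i B hB
  choose d hd0 hd using fun i => comp_bound hF i B
  refine ⟨∑ i ∈ Finset.range (j+1), ((j+1).choose (i+1) : ℝ) * ((c i + d (i+1)) * (B + 1)), ?_, ?_⟩
  · exact Finset.sum_nonneg fun i _ => mul_nonneg (by positivity)
      (mul_nonneg (add_nonneg (hc0 _) (hd0 _)) (by linarith))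
  intro g hg x hb
  rw [remainder_eq hF hg, Finset.sum_mul]
  refine (Finset.abs_sum_le_sum_abs _ _).trans (Finset.sum_le_sum fun i hi => ?_)
  rw [Finset.mem_range] at hi
  rw [abs_mul, abs_mul, Nat.abs_cast, mul_assoc, mul_assoc]
  refine mul_le_mul_of_nonneg_left ?_ (by positivity)
  set w := |iteratedDeriv (j+1) g x| with hw
  have hw0 : 0 ≤ w := abs_nonneg _
  rcases Nat.lt_or_ge i j with h | h
  · have h1 := hd (i+1) g hg x (fun k hk => hb k (by omega))
    have h2 : |iteratedDeriv (j + 1 - (i+1) + 1) g x| ≤ (B + 1) * (1 + w) := by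
      rcases Nat.eq_zero_or_pos i with h | h
      · subst h
        simp only [Nat.zero_add, Nat.add_sub_cancel, ← hw]
        nlinarith
      · have := hb (j + 1 - (i+1) + 1) (by omega)
        nlinarith
    have h3 : |iteratedDeriv (i+1) (fun y => F (g y)) x| ≤ c i + d (i+1) := by
      linarith [hc0 i]
    rw [mul_assoc]
    exact mul_le_mul h3 h2 (abs_nonneg _) (add_nonneg (hc0 _) (hd0 _))
  · have hij : i = j := by omega
    subst hij
    have h1 := hc i g hg x (fun k hk => hb k (by omega))
    have h2 := hb (i + 1 - (i+1) + 1) (by omega)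
    calc _ ≤ (c i * (1 + w)) * B := mul_le_mul h1 h2 (abs_nonneg _) (mul_nonneg (hc0 _) (by linarith))
      _ ≤ _ := by
        have a1 := hc0 i
        have a2 := hd0 (i+1)
        have : 0 ≤ c i * (1+w) := by positivity
        have : 0 ≤ d (i+1) * ((B+1)*(1+w)) := by positivity
        nlinarith

/-! ### Part D: bounds on higher derivatives, at unit viscosity -/

lemma dT_dXn_pde {f : ℝ → ℝ} (hf : ContDiff ℝ (⊤ : ℕ∞) f) {ν : ℝ} {v : ℝ → ℝ → ℝ}
    (hv : SmoothPos v)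
    (hpde : ∀ t, 0 < t → ∀ x, deriv (fun s => v s x) t + deriv f (v t x) * deriv (v t) x
      - ν * deriv (deriv (v t)) x = 0) (j : ℕ) {t : ℝ} (ht : 0 < t) (x : ℝ) :
    dT (dXn v j) t x = ν * dXn v (j+2) t x
      - iteratedDeriv j (fun y => deriv f (v t y) * deriv (v t) y) x := by
  rw [hv.dT_dXn j ht x]
  have hs := hv.slice ht
  have e : dT v t = fun y => ν * deriv (deriv (v t)) y - deriv f (v t y) * deriv (v t) y := by
    funext y
    have := hpde t ht y
    unfold dT
    linarith
  have h1 : ContDiff ℝ (⊤ : ℕ∞) (fun y => deriv f (v t y) * deriv (v t) y) :=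
    ((smooth_deriv hf).comp hs).mul (smooth_deriv hs)
  have h2 : ContDiff ℝ (⊤ : ℕ∞) (fun y => ν * deriv (deriv (v t)) y) :=
    contDiff_const.mul (smooth_deriv (smooth_deriv hs))
  rw [e, iteratedDeriv_fun_sub (h2.of_le (natLeTop j)).contDiffAt (h1.of_le (natLeTop j)).contDiffAt,
    iteratedDeriv_const_mul_field, ← iteratedDeriv_succ', ← iteratedDeriv_succ']
  rfl

/-- Normalised (unit viscosity) bounded solutions with period `L`. -/
structure NormSol (f : ℝ → ℝ) (L D C1 : ℝ) (v : ℝ → ℝ → ℝ) : Prop where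
  hL : 0 < L
  hv : SmoothPos v
  hper : ∀ t x, v t (x + L) = v t x
  hpde : ∀ t, 0 < t → ∀ x, deriv (fun s => v s x) t + deriv f (v t x) * deriv (v t) x
      - 1 * deriv (deriv (v t)) x = 0
  hb0 : ∀ t, 0 < t → ∀ x, |v t x| ≤ D
  hb1 : ∀ t, 0 < t → ∀ x, |deriv (v t) x| ≤ C1

lemma iteratedDeriv_periodic {g : ℝ → ℝ} {L : ℝ} (hp : ∀ x, g (x + L) = g x) (j : ℕ) (x : ℝ) :
    iteratedDeriv j g (x + L) = iteratedDeriv j g x := by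
  have h := congrFun (iteratedDeriv_comp_add_const j g L) x
  have e : (fun z => g (z + L)) = g := funext hp
  rw [e] at h
  exact h.symm

lemma higher_step {f : ℝ → ℝ} (hf : ContDiff ℝ (⊤ : ℕ∞) f) {L D C1 : ℝ}
    {j : ℕ} {B Cl Cb δ t : ℝ} (hB : 0 ≤ B) (hCl : 0 ≤ Cl) (hCb : 0 ≤ Cb)
    (hδ : 0 < δ) (ht : δ < t)
    (v : ℝ → ℝ → ℝ) (hv : NormSol f L D C1 v)
    (hbd : ∀ s ≥ t - δ, ∀ x, |dXn v j s x| ≤ B)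
    (hl : ∀ s ≥ t - δ, ∀ x, |iteratedDeriv (j+1) (fun y => deriv f (v s y) * deriv (v s) y) x
       - deriv f (v s x) * dXn v (j+2) s x| ≤ Cl * (1 + |dXn v (j+1) s x|))
    (hb : ∀ s ≥ t - δ, ∀ x, |iteratedDeriv j (fun y => deriv f (v s y) * deriv (v s) y) x
       - deriv f (v s x) * dXn v (j+1) s x| ≤ Cb) (x : ℝ) :
    δ * (dXn v (j+1) t x)^2 ≤ (1 + 2 * δ * Cl) * B^2
      + (2 * δ * Cl + 2 * (1 + 2 * δ * Cl) * B * Cb) * δ := by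
  set lam := 1 + 2 * δ * Cl with hlam
  have hlam1 : 1 ≤ lam := by have : 0 ≤ 2 * δ * Cl := by positivity
                             linarith
  set K := 2 * δ * Cl + 2 * lam * B * Cb with hK
  set s0 := t - δ with hs0
  have hs0p : 0 < s0 := by linarith
  have hsm := hv.hv
  have hpos : ∀ s ∈ Icc s0 t, 0 < s := fun s hs => hs0p.trans_le hs.1
  have key := max_principle (L := L) (t0 := s0) (t1 := t) (K := lam * B^2) hv.hL
    (fun s x => (s - s0) * (dXn v (j+1) s x)^2 + lam * (dXn v j s x)^2 - K * (s - s0))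
    (fun s x => ((dXn v (j+1) s x)^2
      + (s - s0) * (2 * dXn v (j+1) s x * dT (dXn v (j+1)) s x))
      + lam * (2 * dXn v j s x * dT (dXn v j) s x) - K)
    (fun s x => (s - s0) * (2 * dXn v (j+1) s x * dXn v (j+2) s x)
      + lam * (2 * dXn v j s x * dXn v (j+1) s x))
    (fun s x => (s - s0) * (2 * dXn v (j+2) s x * dXn v (j+2) s x
        + 2 * dXn v (j+1) s x * dXn v (j+3) s x)
      + lam * (2 * dXn v (j+1) s x * dXn v (j+1) s x + 2 * dXn v j s x * dXn v (j+2) s x))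
    ?_ ?_ ?_ ?_ ?_ ?_ ?_ t ⟨by linarith, le_refl _⟩ x
  · have e : t - s0 = δ := by rw [hs0]; ring
    rw [e] at key
    have : 0 ≤ lam * (dXn v j t x)^2 := by positivity
    linarith
  · have hsub : Icc s0 t ×ˢ (univ : Set ℝ) ⊆ Om := fun z hz => ⟨hpos z.1 hz.1, mem_univ _⟩
    have h1 := (hsm.dXn (j+1)).continuousOn.mono hsub
    have h2 := (hsm.dXn j).continuousOn.mono hsub
    have h3 : ContinuousOn (fun z : ℝ × ℝ => z.1 - s0) (Icc s0 t ×ˢ (univ : Set ℝ)) := by fun_prop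
    exact ((h3.mul (h1.pow 2)).add (continuousOn_const.mul (h2.pow 2))).sub
      (continuousOn_const.mul h3)
  · intro s hs x
    have h1 : ∀ k, dXn v k s (x + L) = dXn v k s x := fun k =>
      iteratedDeriv_periodic (hv.hper s) k x
    simp only [h1]
  · intro s hs x
    have hs' := hpos s (Ioc_subset_Icc_self hs)
    have h1 := (hsm.dXn (j+1)).hasDerivAt_dT hs' x
    have h2 := (hsm.dXn j).hasDerivAt_dT hs' x
    have h3 : HasDerivAt (fun s : ℝ => s - s0) 1 s := (hasDerivAt_id s).sub_const s0
    have := ((h3.mul (h1.pow 2)).add ((h2.pow 2).const_mul lam)).sub (h3.const_mul K)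
    refine this.congr_deriv ?_
    simp
  · intro s hs x
    have hs' := hpos s (Ioc_subset_Icc_self hs)
    have h1 := (hsm.dXn (j+1)).hasDerivAt_dX hs' x
    have h2 := (hsm.dXn j).hasDerivAt_dX hs' x
    rw [← dXn_succ] at h1 h2
    have := (((h1.pow 2).const_mul (s - s0)).add ((h2.pow 2).const_mul lam)).sub_const (K * (s - s0))
    refine this.congr_deriv ?_
    simp
  · intro s hs x
    have hs' := hpos s (Ioc_subset_Icc_self hs)
    have h0 := (hsm.dXn (j+2)).hasDerivAt_dX hs' x
    have h1 := (hsm.dXn (j+1)).hasDerivAt_dX hs' x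
    have h2 := (hsm.dXn j).hasDerivAt_dX hs' x
    rw [← dXn_succ] at h0 h1 h2
    have := (((h1.const_mul 2).mul h0).const_mul (s - s0)).add
      (((h2.const_mul 2).mul h1).const_mul lam)
    exact this
  · intro s hs x _ hx0 hxx0
    have hs' := hpos s (Ioc_subset_Icc_self hs)
    have hge : s ≥ t - δ := hs.1.le
    have p1 := dT_dXn_pde hf hsm hv.hpde (j+1) hs' x
    have p0 := dT_dXn_pde hf hsm hv.hpde j hs' x
    have b1 := hl s hge x
    have b0 := hb s hge x
    have by0 := hbd s hge x
    simp only [p1, p0]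
    rw [show j + 1 + 2 = j + 3 from rfl]
    set w := dXn v (j+1) s x
    set y := dXn v j s x
    set w1 := dXn v (j+2) s x
    set w2 := dXn v (j+3) s x
    set Q1 := iteratedDeriv (j+1) (fun y => deriv f (v s y) * deriv (v s) y) x
    set Q0 := iteratedDeriv j (fun y => deriv f (v s y) * deriv (v s) y) x
    set a := deriv f (v s x)
    set q := s - s0 with hq
    have hq0 : 0 ≤ q := by rw [hq]; linarith [hs.1]
    have hq1 : q ≤ δ := by rw [hq, hs0]; linarith [hs.2]
    obtain ⟨r1, hr1⟩ : ∃ r, r = Q1 - a * w1 := ⟨_, rfl⟩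
    obtain ⟨r0, hr0⟩ : ∃ r, r = Q0 - a * w := ⟨_, rfl⟩
    rw [← hr1] at b1
    rw [← hr0] at b0
    have hQ1 : Q1 = r1 + a * w1 := by linarith
    have hQ0 : Q0 = r0 + a * w := by linarith
    rw [hQ1, hQ0]
    have id1 : (w ^ 2 + q * (2 * w * (1 * w2 - (r1 + a * w1)))) +
        lam * (2 * y * (1 * w1 - (r0 + a * w))) - K
        = -a * (q * (2 * w * w1) + lam * (2 * y * w))
        + (q * (2 * w1 * w1 + 2 * w * w2) + lam * (2 * w * w + 2 * y * w1))
        + w^2 - 2 * q * w1^2 - 2 * q * (w * r1) - 2 * lam * w^2 - 2 * lam * (y * r0) - K := by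
      ring
    rw [id1, hx0]
    have c1 : -(w * r1) ≤ Cl * (1 + 2 * w^2) := by
      have : |w * r1| ≤ |w| * (Cl * (1 + |w|)) := by
        rw [abs_mul]; exact mul_le_mul_of_nonneg_left b1 (abs_nonneg _)
      have h2 : |w| * (Cl * (1 + |w|)) ≤ Cl * (1 + 2 * w^2) := by
        have : |w| * (1 + |w|) ≤ 1 + 2 * w^2 := by
          rw [← sq_abs w]; nlinarith [sq_nonneg (|w| - 1), abs_nonneg w]
        nlinarith
      linarith [neg_abs_le (w * r1)]
    have c2 : -(y * r0) ≤ B * Cb := by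
      have : |y * r0| ≤ B * Cb := by
        rw [abs_mul]; exact mul_le_mul by0 b0 (abs_nonneg _) hB
      linarith [neg_abs_le (y * r0)]
    have c3 : q * (-(w * r1)) ≤ δ * (Cl * (1 + 2 * w^2)) := by
      have : 0 ≤ Cl * (1 + 2 * w^2) := by positivity
      calc q * (-(w * r1)) ≤ q * (Cl * (1 + 2 * w^2)) := mul_le_mul_of_nonneg_left c1 hq0
        _ ≤ _ := mul_le_mul_of_nonneg_right hq1 this
    have c4 : lam * (-(y * r0)) ≤ lam * (B * Cb) := mul_le_mul_of_nonneg_left c2 (by linarith)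
    have c5 : 0 ≤ q * w1^2 := by positivity
    have c6 : 2 * lam * w^2 = 2 * w^2 + 4 * (δ * (Cl * w^2)) := by rw [hlam]; ring
    have c7 : K = 2 * (δ * Cl) + 2 * (lam * (B * Cb)) := by rw [hK]; ring
    have c8 : 0 ≤ w^2 := sq_nonneg _
    linarith
  · intro x
    have := hbd s0 (le_refl _) x
    have h2 : (dXn v j s0 x)^2 ≤ B^2 := sq_le_sq' (by linarith [neg_abs_le (dXn v j s0 x)])
      ((le_abs_self _).trans this)
    simp only [sub_self, zero_mul, mul_zero, zero_add, sub_zero]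
    exact mul_le_mul_of_nonneg_left h2 (by linarith)

lemma higher_bounds {f : ℝ → ℝ} (hf : ContDiff ℝ (⊤ : ℕ∞) f) (D C1 : ℝ) (j : ℕ) :
    ∀ τ > 0, ∃ C, 0 ≤ C ∧ ∀ L v, NormSol f L D C1 v → ∀ t ≥ τ, ∀ x, ∀ i ≤ j + 1,
      |dXn v i t x| ≤ C := by
  induction j with
  | zero =>
    intro τ hτ
    refine ⟨max 0 (max D C1), le_max_left _ _, ?_⟩
    intro L v hv t ht x i hi
    have ht0 : 0 < t := hτ.trans_le ht
    interval_cases i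
    · rw [dXn_zero]
      exact (hv.hb0 t ht0 x).trans ((le_max_left _ _).trans (le_max_right _ _))
    · rw [dXn_one]
      exact (hv.hb1 t ht0 x).trans ((le_max_right _ _).trans (le_max_right _ _))
  | succ j ih =>
    intro τ hτ
    obtain ⟨B, hB, hBb⟩ := ih (τ/2) (by linarith)
    obtain ⟨Cl, hCl, hl⟩ := remainder_bound_lin (smooth_deriv hf) (j+1) (by omega) B hB
    obtain ⟨Cb, hCb, hb⟩ := remainder_bound (smooth_deriv hf) (j+1) B hB
    have hδ : 0 < τ / 2 := by linarith
    set M := ((1 + 2 * (τ/2) * Cl) * B^2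
      + (2 * (τ/2) * Cl + 2 * (1 + 2 * (τ/2) * Cl) * B * Cb) * (τ/2)) / (τ/2) with hM
    refine ⟨max B (Real.sqrt M), hB.trans (le_max_left _ _), ?_⟩
    intro L v hv t ht x i hi
    rcases Nat.lt_or_ge i (j+2) with h | h
    · exact (hBb L v hv t (by linarith) x i (by omega)).trans (le_max_left _ _)
    · have hi : i = j + 1 + 1 := by omega
      subst hi
      refine le_trans ?_ (le_max_right _ _)
      apply Real.abs_le_sqrt
      rw [hM, le_div_iff₀ hδ, mul_comm]
      refine higher_step hf hB hCl hCb hδ (by linarith) v hv ?_ ?_ ?_ x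
      · intro s hs x
        exact hBb L v hv s (by linarith) x _ (by omega)
      · intro s hs x
        exact hl (v s) (hv.hv.slice (by linarith)) x
          (fun i hi => hBb L v hv s (by linarith) x i hi)
      · intro s hs x
        exact hb (v s) (hv.hv.slice (by linarith)) x
          (fun i hi => hBb L v hv s (by linarith) x i hi)

/-! ### Part E: first order estimates -/

instance prob_unit : IsProbabilityMeasure (volume.restrict (Ioc (0:ℝ) 1)) :=
  ⟨by simp⟩

lemma cont_bdd_periodic {g : ℝ → ℝ} (hg : Continuous g) (hp : ∀ x, g (x + 1) = g x) :
    ∃ C, ∀ x, |g x| ≤ C := by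
  obtain ⟨C, hC⟩ := (isCompact_Icc (a := (0:ℝ)) (b := 1)).exists_bound_of_continuousOn hg.continuousOn
  refine ⟨C, fun x => ?_⟩
  obtain ⟨y, hy, h⟩ := periodic_to_unit one_pos hp x
  rw [h]; exact hC y hy

lemma eLpNorm_unit_le {g : ℝ → ℝ} {C : ℝ} (p : ℝ≥0∞) (hC : ∀ x, |g x| ≤ C) :
    eLpNorm g p (volume.restrict (Ioc (0:ℝ) 1)) ≤ ENNReal.ofReal C := by
  have := eLpNorm_le_of_ae_bound (p := p) (μ := volume.restrict (Ioc (0:ℝ) 1)) (f := g) (C := C)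
    (Filter.Eventually.of_forall hC)
  refine this.trans ?_
  simp

lemma eLpNorm_unit_ne_top {g : ℝ → ℝ} (hg : Continuous g) (hp : ∀ x, g (x + 1) = g x) (p : ℝ≥0∞) :
    eLpNorm g p (volume.restrict (Ioc (0:ℝ) 1)) ≠ ⊤ := by
  obtain ⟨C, hC⟩ := cont_bdd_periodic hg hp
  exact ((eLpNorm_unit_le p hC).trans_lt ENNReal.ofReal_lt_top).ne

lemma sobLp_nonneg (m : ℕ) (p : ℝ≥0∞) (v : ℝ → ℝ) : 0 ≤ sobLp m p v := ENNReal.toReal_nonneg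

lemma sobLp_le_of_bound {m : ℕ} {p : ℝ≥0∞} {v : ℝ → ℝ} {C : ℝ} (hC0 : 0 ≤ C)
    (hC : ∀ x, |iteratedDeriv m v x| ≤ C) : sobLp m p v ≤ C := by
  unfold sobLp
  exact ENNReal.toReal_le_of_le_ofReal hC0 (eLpNorm_unit_le p hC)

lemma le_sobLp_top {m : ℕ} {v : ℝ → ℝ} (hv : Continuous (iteratedDeriv m v))
    (hp : ∀ x, v (x + 1) = v x) (x : ℝ) : |iteratedDeriv m v x| ≤ sobLp m ⊤ v := by
  have hper := fun x => iteratedDeriv_periodic hp m x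
  have hfin := eLpNorm_unit_ne_top hv hper ⊤
  have hae : ∀ᵐ y ∂(volume.restrict (Ioc (0:ℝ) 1)), |iteratedDeriv m v y| ≤ sobLp m ⊤ v := by
    have := ae_le_eLpNormEssSup (f := iteratedDeriv m v) (μ := volume.restrict (Ioc (0:ℝ) 1))
    filter_upwards [this] with y hy
    unfold sobLp
    rw [← eLpNorm_exponent_top] at hy
    have h2 := (ENNReal.toReal_le_toReal (by simp) hfin).2 hy
    simpa using h2
  have heq : (fun y => max |iteratedDeriv m v y| (sobLp m ⊤ v)) =ᵐ[volume.restrict (Ioc (0:ℝ) 1)]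
      fun _ => sobLp m ⊤ v := by
    filter_upwards [hae] with y hy
    exact max_eq_right hy
  have hon := Measure.eqOn_Ioc_of_ae_eq (μ := volume) heq
    (by fun_prop) continuousOn_const
  have hx : ∃ y ∈ Ioc (0:ℝ) 1, iteratedDeriv m v x = iteratedDeriv m v y := by
    have hp' : Function.Periodic (iteratedDeriv m v) 1 := hper
    have := hp'.exists_mem_Ioc one_pos x 0
    simpa using this
  obtain ⟨y, hy, hxy⟩ := hx
  rw [hxy]
  have := hon hy
  simp only at this
  rw [← this]
  exact le_max_left _ _

lemma integrableOn_unit {g : ℝ → ℝ} (hg : Continuous g) : IntegrableOn g (Ioc (0:ℝ) 1) :=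
  (hg.integrableOn_Icc).mono_set Ioc_subset_Icc_self

lemma sobLp_one {m : ℕ} {v : ℝ → ℝ} (hv : Continuous (iteratedDeriv m v)) :
    sobLp m 1 v = ∫ x in Ioc (0:ℝ) 1, |iteratedDeriv m v x| := by
  unfold sobLp
  have := integral_norm_eq_lintegral_enorm (f := iteratedDeriv m v)
    (μ := volume.restrict (Ioc (0:ℝ) 1)) hv.aestronglyMeasurable
  rw [eLpNorm_one_eq_lintegral_enorm, ← this]
  rfl

namespace IsBurgersSolution

variable {f : ℝ → ℝ} {σ ν D : ℝ} {u : ℝ → ℝ → ℝ}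

lemma smoothPos (h : IsBurgersSolution f σ ν u) : SmoothPos u :=
  h.hu.mono (prod_mono_left Ioi_subset_Ici_self)

lemma slice (h : IsBurgersSolution f σ ν u) {t : ℝ} (ht : 0 ≤ t) : ContDiff ℝ (⊤ : ℕ∞) (u t) := by
  have h1 : ContDiffOn ℝ (⊤ : ℕ∞) (fun y : ℝ => (t, y)) univ :=
    (contDiff_const.prodMk contDiff_id).contDiffOn
  have := ContDiffOn.comp (g := Function.uncurry u) h.hu h1 (fun y _ => ⟨ht, mem_univ _⟩)
  exact contDiffOn_univ.1 this

lemma cont_u (h : IsBurgersSolution f σ ν u) :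
    ContinuousOn (Function.uncurry u) (Ici (0:ℝ) ×ˢ univ) := h.hu.continuousOn

lemma cont_ux (h : IsBurgersSolution f σ ν u) :
    ContinuousOn (Function.uncurry (dX u)) (Ici (0:ℝ) ×ˢ univ) := by
  have hud : UniqueDiffOn ℝ (Ici (0:ℝ) ×ˢ (univ : Set ℝ)) :=
    (uniqueDiffOn_Ici 0).prod uniqueDiffOn_univ
  have h1 := h.hu.continuousOn_fderivWithin hud (by simp)
  have h2 : ContinuousOn (fun z => fderivWithin ℝ (Function.uncurry u) (Ici (0:ℝ) ×ˢ univ) z (0, 1))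
      (Ici (0:ℝ) ×ˢ univ) := h1.clm_apply continuousOn_const
  refine h2.congr ?_
  rintro ⟨t, x⟩ ⟨ht, -⟩
  have hd : HasFDerivWithinAt (Function.uncurry u)
      (fderivWithin ℝ (Function.uncurry u) (Ici (0:ℝ) ×ˢ univ) (t, x))
      (Ici (0:ℝ) ×ˢ univ) (t, x) :=
    (h.hu.differentiableOn (by simp) (t, x) ⟨ht, mem_univ _⟩).hasFDerivWithinAt
  have hc : HasDerivWithinAt (fun y : ℝ => (t, y)) ((0:ℝ), (1:ℝ)) univ x :=
    ((hasDerivAt_const x t).prodMk (hasDerivAt_id x)).hasDerivWithinAt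
  have := hd.comp_hasDerivWithinAt x hc (fun y _ => ⟨ht, mem_univ _⟩)
  exact (hasDerivWithinAt_univ.1 this).deriv

lemma ux_init (h : IsBurgersSolution f σ ν u) (hD : burgersD u = D) (x : ℝ) :
    |dX u 0 x| ≤ D := by
  have h1 := le_sobLp_top (m := 1) (v := u 0)
    (smooth_iteratedDeriv (h.slice le_rfl) 1).continuous (h.hper 0) x
  rw [iteratedDeriv_one] at h1
  refine h1.trans ?_
  rw [← hD]
  exact le_max_right _ _

lemma l1_pos (h : IsBurgersSolution f σ ν u) : 0 < sobLp 0 1 (u 0) := by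
  have hc : Continuous (u 0) := (h.slice le_rfl).continuous
  rw [sobLp_one (by simpa using hc)]
  simp only [iteratedDeriv_zero]
  obtain ⟨x, hx⟩ := h.hinit
  have hnn : 0 ≤ ∫ x in Ioc (0:ℝ) 1, |u 0 x| := integral_nonneg fun _ => abs_nonneg _
  refine lt_of_le_of_ne hnn ?_
  intro h0
  have h1 := (integral_eq_zero_iff_of_nonneg (μ := volume.restrict (Ioc (0:ℝ) 1))
    (f := fun x => |u 0 x|) (fun _ => abs_nonneg _) (integrableOn_unit hc.abs)).1 h0.symm
  have hon := Measure.eqOn_Ioc_of_ae_eq (μ := volume) h1 hc.abs.continuousOn continuousOn_const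
  have hp' : Function.Periodic (u 0) 1 := h.hper 0
  obtain ⟨y, hy, hxy⟩ := hp'.exists_mem_Ioc one_pos x 0
  have := hon (x := y) (by simpa using hy)
  simp only [Pi.zero_apply, abs_eq_zero] at this
  exact hx (hxy.trans this)

lemma D_pos (h : IsBurgersSolution f σ ν u) (hD : burgersD u = D) : 0 < D := by
  rw [← hD]
  exact (inv_pos.2 h.l1_pos).trans_le (le_max_left _ _)

lemma l1_ge (h : IsBurgersSolution f σ ν u) (hD : burgersD u = D) :
    D⁻¹ ≤ sobLp 0 1 (u 0) := by
  have h1 : (sobLp 0 1 (u 0))⁻¹ ≤ D := by rw [← hD]; exact le_max_left _ _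
  exact inv_le_of_inv_le₀ h.l1_pos h1

lemma dper (h : IsBurgersSolution f σ ν u) (j : ℕ) (t x : ℝ) : dXn u j t (x+1) = dXn u j t x :=
  iteratedDeriv_periodic (h.hper t) j x

lemma hasDerivAt_flux (h : IsBurgersSolution f σ ν u) {t : ℝ} (ht : 0 < t) (x : ℝ) :
    HasDerivAt (fun y => deriv f (u t y) * dXn u 1 t y)
      (iteratedDeriv 2 f (u t x) * (dXn u 1 t x)^2 + deriv f (u t x) * dXn u 2 t x) x := by
  have h1 := h.smoothPos.hasDerivAt_dX ht x
  have h2 := (h.smoothPos.dXn 1).hasDerivAt_dX ht x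
  rw [← dXn_succ] at h2
  rw [← dXn_one] at h1
  have h3 := smooth_hasDerivAt_iter h.hf 1 (u t x)
  rw [iteratedDeriv_one] at h3
  have := (h3.comp x h1).mul h2
  refine this.congr_deriv ?_
  simp only [Function.comp_apply, Nat.reduceAdd]
  ring

lemma dT_ux (h : IsBurgersSolution f σ ν u) {t : ℝ} (ht : 0 < t) (x : ℝ) :
    dT (dXn u 1) t x = ν * dXn u 3 t x - (iteratedDeriv 2 f (u t x) * (dXn u 1 t x)^2
      + deriv f (u t x) * dXn u 2 t x) := by
  rw [dT_dXn_pde h.hf h.smoothPos h.hpde 1 ht x, iteratedDeriv_one]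
  have := (h.hasDerivAt_flux ht x).deriv
  rw [dXn_one] at this ⊢
  rw [← this]
  rfl

lemma dT_u (h : IsBurgersSolution f σ ν u) {t : ℝ} (ht : 0 < t) (x : ℝ) :
    dT u t x = ν * dXn u 2 t x - deriv f (u t x) * dXn u 1 t x := by
  have := h.hpde t ht x
  have e2 : dXn u 2 t x = deriv (deriv (u t)) x := by
    rw [dXn_succ, dXn_one]; rfl
  rw [e2, dXn_one]
  unfold dT dX
  linarith

lemma hasDerivAt_succ (h : IsBurgersSolution f σ ν u) (j : ℕ) {t : ℝ} (ht : 0 < t) (x : ℝ) :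
    HasDerivAt (dXn u j t) (dXn u (j+1) t x) x := by
  have := (h.smoothPos.dXn j).hasDerivAt_dX ht x
  rwa [← dXn_succ] at this

lemma oleinik1 (h : IsBurgersSolution f σ ν u) (hD : burgersD u = D) {t : ℝ} (ht : 0 ≤ t) (x : ℝ) :
    dX u t x ≤ D := by
  rw [← dXn_one]
  refine max_principle (L := 1) (t0 := 0) (t1 := t) one_pos (dXn u 1) (dT (dXn u 1)) (dXn u 2)
    (dXn u 3) ?_ ?_ ?_ ?_ ?_ ?_ ?_ t ⟨ht, le_rfl⟩ x
  · rw [dXn_one]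
    exact h.cont_ux.mono (prod_mono_left Icc_subset_Ici_self)
  · intro t _ x; exact h.dper 1 t x
  · intro t ht x; exact (h.smoothPos.dXn 1).hasDerivAt_dT ht.1 x
  · intro t ht x; exact h.hasDerivAt_succ 1 ht.1 x
  · intro t ht x; exact h.hasDerivAt_succ 2 ht.1 x
  · intro t ht x _ h1 h2
    rw [h.dT_ux ht.1, h1]
    have := h.hconv (u t x)
    have h4 : 0 ≤ iteratedDeriv 2 f (u t x) * (dXn u 1 t x)^2 :=
      mul_nonneg (h.hσ.le.trans this) (sq_nonneg _)
    have h5 := mul_nonpos_of_nonneg_of_nonpos h.hν.le h2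
    linarith
  · intro x
    rw [dXn_one]
    exact (le_abs_self _).trans (h.ux_init hD x)

lemma oleinik2 (h : IsBurgersSolution f σ ν u) {t : ℝ} (ht : 0 < t) (x : ℝ) :
    dX u t x ≤ 1 / (σ * t) := by
  have key : t * dXn u 1 t x ≤ 1 / σ := by
    refine max_principle (L := 1) (t0 := 0) (t1 := t) one_pos (fun s x => s * dXn u 1 s x)
      (fun s x => dXn u 1 s x + s * dT (dXn u 1) s x) (fun s x => s * dXn u 2 s x)
      (fun s x => s * dXn u 3 s x) ?_ ?_ ?_ ?_ ?_ ?_ ?_ t ⟨ht.le, le_rfl⟩ x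
    · rw [dXn_one]
      exact continuousOn_fst.mul (h.cont_ux.mono (prod_mono_left Icc_subset_Ici_self))
    · intro t _ x; simp only [h.dper 1 t x]
    · intro t ht x
      have := (hasDerivAt_id t).mul ((h.smoothPos.dXn 1).hasDerivAt_dT ht.1 x)
      refine this.congr_deriv ?_
      simp
    · intro t ht x; exact (h.hasDerivAt_succ 1 ht.1 x).const_mul t
    · intro t ht x; exact (h.hasDerivAt_succ 2 ht.1 x).const_mul t
    · intro t ht x hK h1 h2
      have ht0 : 0 < t := ht.1
      have h1' : dXn u 2 t x = 0 := by
        rcases mul_eq_zero.1 h1 with h | h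
        · linarith
        · exact h
      simp only [h.dT_ux ht.1, h1']
      have hc := h.hconv (u t x)
      have hσ := h.hσ
      have hw : 0 < dXn u 1 t x := by
        have : 0 < 1 / σ := by positivity
        have : 0 < t * dXn u 1 t x := this.trans hK
        exact pos_of_mul_pos_right this ht0.le
      have h5 : ν * (t * dXn u 3 t x) ≤ 0 := mul_nonpos_of_nonneg_of_nonpos h.hν.le h2
      rw [div_lt_iff₀ hσ] at hK
      set w := dXn u 1 t x
      have h6 : σ * (t * w^2) ≤ iteratedDeriv 2 f (u t x) * (t * w^2) :=
        mul_le_mul_of_nonneg_right hc (by positivity)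
      have h7 : w * 1 ≤ w * (t * w * σ) := mul_le_mul_of_nonneg_left hK.le hw.le
      nlinarith
    · intro x
      have := h.hσ
      simp only [zero_mul]
      positivity
  rw [dXn_one] at key
  rw [le_div_iff₀ (mul_pos h.hσ ht)]
  rw [le_div_iff₀ h.hσ] at key
  linarith

end IsBurgersSolution

lemma mean_zero_bound {g : ℝ → ℝ} {K : ℝ} (hg : ContDiff ℝ (⊤ : ℕ∞) g) (hp : ∀ x, g (x+1) = g x)
    (hm : ∫ x in Ioc (0:ℝ) 1, g x = 0) (hK : ∀ x, deriv g x ≤ K) (x : ℝ) : |g x| ≤ K := by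
  have hgd : Differentiable ℝ g := hg.differentiable (by simp)
  have hK0 : 0 ≤ K := by
    obtain ⟨c, _, hc⟩ := exists_deriv_eq_slope g (zero_lt_one (α := ℝ)) hg.continuous.continuousOn
      hgd.differentiableOn
    have h0 := hp 0
    rw [zero_add] at h0
    rw [h0, sub_self, zero_div] at hc
    rw [← hc]; exact hK c
  have hx0 : ∃ x0, g x0 = 0 := by
    by_contra hne
    push Not at hne
    have hintegral : ∫ x in (0:ℝ)..1, g x = 0 := by
      rw [intervalIntegral.integral_of_le zero_le_one]; exact hm
    obtain ⟨c, _, hc⟩ := exists_deriv_eq_slope (fun y => ∫ x in (0:ℝ)..y, g x) (zero_lt_one (α := ℝ))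
      (by
        apply Continuous.continuousOn
        exact intervalIntegral.continuous_primitive (fun a b => hg.continuous.intervalIntegrable a b) 0)
      (fun y _ => (intervalIntegral.integral_hasDerivAt_right (hg.continuous.intervalIntegrable _ _)
        hg.continuous.stronglyMeasurable.stronglyMeasurableAtFilter
        hg.continuous.continuousAt).differentiableAt.differentiableWithinAt)
    rw [(intervalIntegral.integral_hasDerivAt_right (hg.continuous.intervalIntegrable _ _)
        hg.continuous.stronglyMeasurable.stronglyMeasurableAtFilter
        hg.continuous.continuousAt).deriv, hintegral] at hc
    simp at hc
    exact hne c hc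
  obtain ⟨x0, hx0⟩ := hx0
  have hmono : ∀ a b : ℝ, a ≤ b → g b - g a ≤ K * (b - a) := by
    intro a b hab
    exact image_sub_le_mul_sub_of_deriv_le hgd hK hab
  have hp' : Function.Periodic g 1 := hp
  obtain ⟨y, hy, hxy⟩ := hp'.exists_mem_Ioc one_pos x x0
  rw [hxy]
  have h1 := hmono x0 y hy.1.le
  have h2 := hmono y (x0+1) hy.2
  rw [hp, hx0] at h2
  rw [hx0] at h1
  rw [abs_le]
  constructor <;> nlinarith [hy.1, hy.2]

lemma l1_deriv_bound {g : ℝ → ℝ} {K : ℝ} (hg : ContDiff ℝ (⊤ : ℕ∞) g) (hp : ∀ x, g (x+1) = g x)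
    (hK : ∀ x, deriv g x ≤ K) (hK0 : 0 ≤ K) : ∫ x in Ioc (0:ℝ) 1, |deriv g x| ≤ 2 * K := by
  have hc : Continuous (deriv g) := (smooth_deriv hg).continuous
  have h1 : ∫ x in Ioc (0:ℝ) 1, |deriv g x| ≤ ∫ x in Ioc (0:ℝ) 1, (2 * K - deriv g x) := by
    refine integral_mono (integrableOn_unit hc.abs) (integrableOn_unit (by fun_prop)) ?_
    intro x
    have := hK x
    simp only
    rw [abs_le]
    constructor <;> linarith
  refine h1.trans ?_
  rw [integral_sub (integrable_const _) (integrableOn_unit hc)]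
  have h2 : ∫ x in Ioc (0:ℝ) 1, deriv g x = 0 := by
    rw [← intervalIntegral.integral_of_le zero_le_one,
      intervalIntegral.integral_deriv_eq_sub (fun x _ => hg.differentiable (by simp) x)
        (hc.intervalIntegrable _ _)]
    have := hp 0
    rw [zero_add] at this
    rw [this, sub_self]
  rw [h2]
  simp

namespace IsBurgersSolution

variable {f : ℝ → ℝ} {σ ν D : ℝ} {u : ℝ → ℝ → ℝ}

lemma u_bound (h : IsBurgersSolution f σ ν u) (hD : burgersD u = D) {t : ℝ} (ht : 0 ≤ t) (x : ℝ) :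
    |u t x| ≤ D :=
  mean_zero_bound (h.slice ht) (h.hper t) (h.hmean t ht) (fun x => h.oleinik1 hD ht x) x

lemma ux_l1 (h : IsBurgersSolution f σ ν u) (hD : burgersD u = D) {t : ℝ} (ht : 0 ≤ t) :
    ∫ x in Ioc (0:ℝ) 1, |deriv (u t) x| ≤ 2 * D :=
  l1_deriv_bound (h.slice ht) (h.hper t) (fun x => h.oleinik1 hD ht x) (h.D_pos hD).le

lemma z_bound (h : IsBurgersSolution f σ ν u) {K s : ℝ} (hs : s^2 = 1)
    (hK : ∀ x, s * (ν * dX u 0 x - f (u 0 x)) ≤ K) {t : ℝ} (ht : 0 ≤ t) (x : ℝ) :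
    s * (ν * dX u t x - f (u t x)) ≤ K := by
  rw [← dXn_one] at hK ⊢
  refine max_principle (L := 1) (t0 := 0) (t1 := t) one_pos
    (fun t x => s * (ν * dXn u 1 t x - f (u t x)))
    (fun t x => s * (ν * dT (dXn u 1) t x - deriv f (u t x) * dT u t x))
    (fun t x => s * (ν * dXn u 2 t x - deriv f (u t x) * dXn u 1 t x))
    (fun t x => s * (ν * dXn u 3 t x - (iteratedDeriv 2 f (u t x) * (dXn u 1 t x)^2
      + deriv f (u t x) * dXn u 2 t x))) ?_ ?_ ?_ ?_ ?_ ?_ hK t ⟨ht, le_rfl⟩ x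
  · have h1 := h.cont_ux.mono (prod_mono_left (t := univ) (Icc_subset_Ici_self : Icc (0:ℝ) t ⊆ Ici 0))
    have h2 := h.cont_u.mono (prod_mono_left (t := univ) (Icc_subset_Ici_self : Icc (0:ℝ) t ⊆ Ici 0))
    rw [dXn_one]
    exact continuousOn_const.mul ((continuousOn_const.mul h1).sub
      (h.hf.continuous.comp_continuousOn h2))
  · intro t _ x; simp only [h.dper 1 t x, h.hper]
  · intro t ht x
    have h1 := (h.smoothPos.dXn 1).hasDerivAt_dT ht.1 x
    have h2 := h.smoothPos.hasDerivAt_dT ht.1 x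
    have h3 := (h.hf.differentiable (by simp) (u t x)).hasDerivAt
    exact ((h1.const_mul ν).sub (h3.comp t h2)).const_mul s
  · intro t ht x
    have h1 := h.hasDerivAt_succ 1 ht.1 x
    have h2 := h.hasDerivAt_succ 0 ht.1 x
    rw [dXn_zero] at h2
    have h3 := (h.hf.differentiable (by simp) (u t x)).hasDerivAt
    exact ((h1.const_mul ν).sub (h3.comp x h2)).const_mul s
  · intro t ht x
    exact (((h.hasDerivAt_succ 2 ht.1 x).const_mul ν).sub (h.hasDerivAt_flux ht.1 x)).const_mul s
  · intro t ht x _ h1 h2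
    rw [h.dT_ux ht.1, h.dT_u ht.1]
    have h5 := mul_nonpos_of_nonneg_of_nonpos h.hν.le h2
    have h6 : deriv f (u t x) * (s * (ν * dXn u 2 t x - deriv f (u t x) * dXn u 1 t x)) = 0 := by
      rw [h1, mul_zero]
    nlinarith

lemma nux_bound (hf : ContDiff ℝ (⊤ : ℕ∞) f) (D : ℝ) : ∃ C1, 0 ≤ C1 ∧ ∀ (σ ν : ℝ) (u : ℝ → ℝ → ℝ),
    IsBurgersSolution f σ ν u → ν ≤ 1 → burgersD u = D → ∀ t, 0 ≤ t → ∀ x, ν * |dX u t x| ≤ C1 := by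
  obtain ⟨M, hM0, hM⟩ := bdd_on_compact hf.continuous D
  refine ⟨|D| + M + M, by positivity, ?_⟩
  intro σ ν u h hν hD t ht x
  have hDp := h.D_pos hD
  have hb : ∀ x, |ν * dX u 0 x - f (u 0 x)| ≤ |D| + M := by
    intro x
    refine (abs_sub _ _).trans ?_
    have h1 := hM _ (h.u_bound hD le_rfl x)
    have h2 := h.ux_init hD x
    rw [abs_mul, abs_of_pos h.hν, abs_of_pos hDp]
    nlinarith [abs_nonneg (dX u 0 x), h.hν]
  have z1 := h.z_bound (s := 1) (K := |D| + M) (by norm_num) (fun x => by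
    rw [one_mul]; exact (le_abs_self _).trans (hb x)) ht x
  have z2 := h.z_bound (s := -1) (K := |D| + M) (by norm_num) (fun x => by
    rw [neg_one_mul]; exact (neg_le_abs _).trans (hb x)) ht x
  have h3 := hM _ (h.u_bound hD ht x)
  rw [← abs_of_pos h.hν, ← abs_mul, abs_le]
  rw [abs_le] at h3
  constructor <;> linarith

end IsBurgersSolution

/-! ### Part F: rescaling -/

lemma rescale_iter {u : ℝ → ℝ → ℝ} {ν t : ℝ} (hu : ContDiff ℝ (⊤ : ℕ∞) (u t)) (j : ℕ) (y : ℝ) :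
    iteratedDeriv j (fun y => u t (ν * y)) y = ν^j * iteratedDeriv j (u t) (ν * y) :=
  congrFun (iteratedDeriv_comp_const_mul (hu.of_le (natLeTop j)) ν) y

lemma IsBurgersSolution.normSol {f : ℝ → ℝ} {σ ν D C1 : ℝ} {u : ℝ → ℝ → ℝ}
    (h : IsBurgersSolution f σ ν u) (hD : burgersD u = D)
    (hC1 : ∀ t, 0 ≤ t → ∀ x, ν * |dX u t x| ≤ C1) :
    NormSol f (1/ν) D C1 (fun s y => u (ν * s) (ν * y)) := by
  have hν := h.hν
  have hd : ∀ s, deriv (fun y => u (ν * s) (ν * y)) = fun y => ν * deriv (u (ν * s)) (ν * y) := by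
    intro s
    funext y
    rw [deriv_comp_mul_left]; rfl
  refine ⟨by positivity, ?_, ?_, ?_, ?_, ?_⟩
  · have hc : ContDiffOn ℝ (⊤ : ℕ∞) (fun z : ℝ × ℝ => (ν * z.1, ν * z.2)) Om := by
      apply ContDiff.contDiffOn; fun_prop
    exact ContDiffOn.comp (g := Function.uncurry u) h.smoothPos hc
      (fun z hz => ⟨mul_pos hν hz.1, mem_univ _⟩)
  · intro t x
    rw [mul_add, mul_one_div_cancel hν.ne', h.hper]
  · intro t ht x
    have h1 := h.hpde (ν * t) (by positivity) (ν * x)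
    have e1 : deriv (fun s => u (ν * s) (ν * x)) t = ν * deriv (fun s => u s (ν * x)) (ν * t) := by
      have := deriv_comp_mul_left ν (fun s => u s (ν * x)) t
      simpa using this
    have e2 : deriv (deriv (fun y => u (ν * t) (ν * y))) x
        = ν * (ν * deriv (deriv (u (ν * t))) (ν * x)) := by
      rw [hd]
      rw [deriv_const_mul_field]
      have := deriv_comp_mul_left ν (deriv (u (ν * t))) x
      rw [this]; rfl
    rw [e1, e2, hd]
    linear_combination ν * h1
  · intro t ht x
    exact h.u_bound hD (by positivity) _
  · intro t ht x
    rw [hd]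
    simp only
    rw [abs_mul, abs_of_pos hν]
    exact hC1 _ (by positivity) _

lemma deriv_bounds {f : ℝ → ℝ} (hf : ContDiff ℝ (⊤ : ℕ∞) f) (D : ℝ) {τ : ℝ} (hτ : 0 < τ) :
    ∃ K : ℕ → ℝ, (∀ j, 0 ≤ K j) ∧ ∀ (σ ν : ℝ) (u : ℝ → ℝ → ℝ),
      IsBurgersSolution f σ ν u → ν ≤ 1 → burgersD u = D → ∀ t, τ ≤ t → ∀ (j : ℕ) (y : ℝ),
        |iteratedDeriv j (fun y => u t (ν * y)) y| ≤ K j := by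
  obtain ⟨C1, hC10, hC1⟩ := IsBurgersSolution.nux_bound hf D
  choose K hK0 hK using fun j => higher_bounds hf D C1 j τ hτ
  refine ⟨K, hK0, ?_⟩
  intro σ ν u h hν hD t ht j y
  have hνp := h.hν
  have h1 := hK j (1/ν) _ (h.normSol hD (hC1 σ ν u h hν hD)) (t/ν) (by
    rw [ge_iff_le, le_div_iff₀ hνp]
    nlinarith) y j (by omega)
  have e : ν * (t / ν) = t := by field_simp
  have h1a : |iteratedDeriv j (fun y => u (ν * (t / ν)) (ν * y)) y| ≤ K j := h1
  rw [e] at h1a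
  exact h1a

/-! ### Part G: local interpolation -/

lemma local_landau {g : ℝ → ℝ} (hg : ContDiff ℝ (⊤ : ℕ∞) g) {x a b h : ℝ}
    (ha : ∀ y ∈ Icc x (x+1), |g y| ≤ a) (hb : ∀ y ∈ Icc x (x+1), |deriv (deriv g) y| ≤ b)
    (hh : 0 < h) (hh2 : h ≤ 1/2) (y : ℝ) (hy : y ∈ Icc x (x+1)) :
    |deriv g y| ≤ 2 * a / h + h * b := by
  have hgd : Differentiable ℝ g := hg.differentiable (by simp)
  have hgd2 : Differentiable ℝ (deriv g) := (smooth_deriv hg).differentiable (by simp)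
  have hb0 : 0 ≤ b := (abs_nonneg _).trans (hb y hy)
  have main : ∀ c d : ℝ, x ≤ c → d ≤ x + 1 → d - c = h → y ∈ Icc c d →
      |deriv g y| ≤ 2 * a / h + h * b := by
    intro c d hc hd hcd hyc
    have hlt : c < d := by linarith
    obtain ⟨ξ, hξ, hs⟩ := exists_deriv_eq_slope g hlt hg.continuous.continuousOn
      hgd.differentiableOn
    have hξI : ξ ∈ Icc x (x+1) := ⟨by linarith [hξ.1], by linarith [hξ.2]⟩
    have h1 : |deriv g ξ| ≤ 2 * a / h := by
      rw [hs, hcd, abs_div, abs_of_pos hh]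
      apply div_le_div_of_nonneg_right _ hh.le
      have e1 := ha d ⟨by linarith, hd⟩
      have e2 := ha c ⟨hc, by linarith⟩
      exact (abs_sub _ _).trans (by linarith)
    have h2 := Convex.norm_image_sub_le_of_norm_deriv_le (f := deriv g) (C := b)
      (s := Icc x (x+1)) (fun z _ => hgd2 z) (fun z hz => hb z hz) (convex_Icc _ _) hξI hy
    rw [Real.norm_eq_abs, Real.norm_eq_abs] at h2
    have h3 : |y - ξ| ≤ h := by
      rw [abs_le]; constructor <;> linarith [hξ.1, hξ.2, hyc.1, hyc.2]
    have h4 : b * |y - ξ| ≤ h * b := by nlinarith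
    have h5 := abs_sub_abs_le_abs_sub (deriv g y) (deriv g ξ)
    linarith
  rcases le_total (y + h) (x + 1) with h1 | h1
  · exact main y (y+h) hy.1 h1 (by ring) ⟨le_rfl, by linarith⟩
  · exact main (y-h) y (by linarith) hy.2 (by ring) ⟨by linarith, le_rfl⟩

lemma interp1 (n : ℕ) : ∀ K : ℕ → ℝ, (∀ j, 0 ≤ K j) → ∃ C, 0 ≤ C ∧ ∀ (g : ℝ → ℝ) (x : ℝ),
    ContDiff ℝ (⊤ : ℕ∞) g → (∀ j, ∀ y ∈ Icc x (x+1), |iteratedDeriv j g y| ≤ K j) →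
    ∀ a, (∀ y ∈ Icc x (x+1), |g y| ≤ a) → ∀ y ∈ Icc x (x+1),
      |deriv g y| ≤ C * a ^ ((n:ℝ)/(n+1)) := by
  induction n with
  | zero =>
    intro K hK
    refine ⟨K 1, hK 1, ?_⟩
    intro g x hg hb a _ y hy
    have := hb 1 y hy
    rw [iteratedDeriv_one] at this
    simpa using this
  | succ n ih =>
    intro K hK
    obtain ⟨C, hC0, hC⟩ := ih (fun j => K (j+1)) (fun j => hK _)
    set c := 1 / (2 * (C + 1) * (1 + K 1)) with hc
    have hK1 := hK 1
    have hcp : 0 < c := by positivity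
    refine ⟨(4/c) ^ (((n+1:ℕ):ℝ)/((n+1:ℕ)+1)), by positivity, ?_⟩
    intro g x hg hb a ha y hy
    have hcont : ContinuousOn (fun y => |deriv g y|) (Icc x (x+1)) :=
      (smooth_deriv hg).continuous.abs.continuousOn
    obtain ⟨y0, hy0, hmax⟩ := isCompact_Icc.exists_isMaxOn ⟨x, by simp⟩ hcont
    set A := |deriv g y0| with hA
    have hA0 : 0 ≤ A := abs_nonneg _
    have hmax' : ∀ y ∈ Icc x (x+1), |deriv g y| ≤ A := fun y hy => hmax hy
    have ha0 : 0 ≤ a := (abs_nonneg _).trans (ha y0 hy0)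
    refine (hmax' y hy).trans ?_
    rcases hA0.eq_or_lt with h0 | hApos
    · rw [← h0]; positivity
    have hAK : A ≤ K 1 := by
      have := hb 1 y0 hy0
      rwa [iteratedDeriv_one] at this
    set θ : ℝ := (n:ℝ)/(n+1) with hθ
    have hn : (0:ℝ) < n + 1 := by positivity
    have hθ1 : 1 - θ = 1/(n+1) := by rw [hθ]; field_simp; ring
    have hθp : 0 < 1 - θ := by rw [hθ1]; positivity
    have hθle : 1 - θ ≤ 1 := by rw [hθ1, div_le_one hn]; linarith [n.cast_nonneg (α := ℝ)]
    have h2 : ∀ y ∈ Icc x (x+1), |deriv (deriv g) y| ≤ C * A ^ θ := by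
      apply hC (deriv g) x (smooth_deriv hg)
      · intro j y hy
        rw [← iteratedDeriv_succ']
        exact hb (j+1) y hy
      · exact hmax'
    set B := A ^ (1 - θ) with hB
    have hBp : 0 < B := Real.rpow_pos_of_pos hApos _
    have hBle : B ≤ 1 + K 1 := by
      calc B ≤ (1 + K 1) ^ (1 - θ) := Real.rpow_le_rpow hA0 (by linarith) hθp.le
        _ ≤ (1 + K 1) ^ (1:ℝ) := Real.rpow_le_rpow_of_exponent_le (by linarith) hθle
        _ = _ := Real.rpow_one _
    have hcK : c * (1 + K 1) = 1 / (2 * (C+1)) := by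
      rw [hc]; field_simp
    have hch : c * B ≤ 1/2 := by
      calc c * B ≤ c * (1 + K 1) := mul_le_mul_of_nonneg_left hBle hcp.le
        _ = 1 / (2 * (C+1)) := hcK
        _ ≤ 1 / 2 := by
          apply one_div_le_one_div_of_le (by norm_num); linarith
    have key := local_landau hg ha h2 (mul_pos hcp hBp) hch y0 hy0
    rw [← hA] at key
    have hBA : B * A ^ θ = A := by
      rw [hB, ← Real.rpow_add hApos]; simp
    have hcC : c * C ≤ 1/2 := by
      have : c ≤ 1 / (2 * (C+1)) := by
        rw [← hcK]; nlinarith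
      calc c * C ≤ 1 / (2 * (C+1)) * C := mul_le_mul_of_nonneg_right this hC0
        _ ≤ 1/2 := by
          rw [div_mul_eq_mul_div, div_le_div_iff₀ (by positivity) (by norm_num)]
          linarith
    have h3 : c * B * (C * A ^ θ) ≤ A / 2 := by
      have : c * B * (C * A ^ θ) = (c * C) * A := by
        rw [← hBA]; rw [hBA]; rw [← hBA]; ring_nf
        rw [hBA]
      rw [this]; nlinarith
    have h4 : A * (c * B) ≤ 4 * a := by
      have : A / 2 ≤ 2 * a / (c * B) := by linarith
      rw [le_div_iff₀ (mul_pos hcp hBp)] at this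
      linarith
    have h5 : A ^ (2 - θ) ≤ 4/c * a := by
      have : A ^ (2 - θ) = A * B := by
        rw [hB, show 2 - θ = 1 + (1 - θ) by ring, Real.rpow_add hApos, Real.rpow_one]
      rw [this, div_mul_eq_mul_div, le_div_iff₀ hcp]
      linarith
    have hexp : (2 - θ) * (((n+1:ℕ):ℝ)/((n+1:ℕ)+1)) = 1 := by
      rw [hθ]; push_cast
      have : (n:ℝ) + 1 + 1 ≠ 0 := by positivity
      field_simp
      ring
    calc A = (A ^ (2 - θ)) ^ (((n+1:ℕ):ℝ)/((n+1:ℕ)+1)) := by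
          rw [← Real.rpow_mul hA0, hexp, Real.rpow_one]
      _ ≤ (4/c * a) ^ (((n+1:ℕ):ℝ)/((n+1:ℕ)+1)) :=
          Real.rpow_le_rpow (by positivity) h5 (by positivity)
      _ = _ := Real.mul_rpow (by positivity) ha0

lemma rpow_weaken {a M θ η : ℝ} (ha : 0 ≤ a) (haM : a ≤ M) (hθ : 0 ≤ θ) (hθη : θ ≤ η)
    (hη1 : η ≤ 1) : a ^ η ≤ (1 + M) * a ^ θ := by
  have h1 : a ^ η = a ^ (η - θ) * a ^ θ := by
    rw [← Real.rpow_add_of_nonneg ha (by linarith) hθ]; ring_nf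
  rw [h1]
  refine mul_le_mul_of_nonneg_right ?_ (Real.rpow_nonneg ha _)
  calc a ^ (η - θ) ≤ (1 + M) ^ (η - θ) := Real.rpow_le_rpow ha (by linarith) (by linarith)
    _ ≤ (1 + M) ^ (1:ℝ) := Real.rpow_le_rpow_of_exponent_le (by linarith) (by linarith)
    _ = _ := Real.rpow_one _

lemma interp2 {θ : ℝ} (hθ0 : 0 < θ) (hθ1 : θ < 1) (K : ℕ → ℝ) (hK : ∀ j, 0 ≤ K j) :
    ∃ C, 0 ≤ C ∧ ∀ (g : ℝ → ℝ) (x : ℝ),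
    ContDiff ℝ (⊤ : ℕ∞) g → (∀ j, ∀ y ∈ Icc x (x+1), |iteratedDeriv j g y| ≤ K j) →
    ∀ a, (∀ y ∈ Icc x (x+1), |g y| ≤ a) → ∀ y ∈ Icc x (x+1), |deriv g y| ≤ C * a ^ θ := by
  obtain ⟨n, hn⟩ := exists_nat_gt (θ / (1 - θ))
  obtain ⟨C, hC0, hC⟩ := interp1 n K hK
  have hn1 : (0:ℝ) < n + 1 := by positivity
  have hK0 := hK 0
  refine ⟨C * (1 + K 0), by positivity, ?_⟩
  intro g x hg hb a ha y hy
  have ha' : ∀ y ∈ Icc x (x+1), |g y| ≤ min a (K 0) := fun y hy =>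
    le_min (ha y hy) (by simpa using hb 0 y hy)
  have ha0 : 0 ≤ min a (K 0) := (abs_nonneg _).trans (ha' y hy)
  refine (hC g x hg hb _ ha' y hy).trans ?_
  rw [mul_assoc]
  refine mul_le_mul_of_nonneg_left ?_ hC0
  refine (rpow_weaken ha0 (min_le_right _ _) hθ0.le (η := (n:ℝ)/(n+1)) ?_ ?_).trans ?_
  · rw [div_lt_iff₀ (by linarith)] at hn
    rw [le_div_iff₀ hn1]; nlinarith
  · rw [div_le_one hn1]; linarith
  · exact mul_le_mul_of_nonneg_left (Real.rpow_le_rpow ha0 (min_le_left _ _) hθ0.le) (by linarith)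

lemma interp3 (j : ℕ) : ∀ θ : ℝ, 0 < θ → θ < 1 → ∀ K : ℕ → ℝ, (∀ j, 0 ≤ K j) →
    ∃ C, 0 ≤ C ∧ ∀ (g : ℝ → ℝ) (x : ℝ),
    ContDiff ℝ (⊤ : ℕ∞) g → (∀ j, ∀ y ∈ Icc x (x+1), |iteratedDeriv j g y| ≤ K j) →
    ∀ a, (∀ y ∈ Icc x (x+1), |g y| ≤ a) → ∀ y ∈ Icc x (x+1),
      |iteratedDeriv (j+1) g y| ≤ C * a ^ θ := by
  induction j with
  | zero =>
    intro θ h0 h1 K hK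
    obtain ⟨C, hC0, hC⟩ := interp2 h0 h1 K hK
    refine ⟨C, hC0, ?_⟩
    simpa using hC
  | succ j ih =>
    intro θ h0 h1 K hK
    have hs0 : 0 < Real.sqrt θ := Real.sqrt_pos.2 h0
    have hs1 : Real.sqrt θ < 1 := by
      rw [Real.sqrt_lt' one_pos]; simpa using h1
    obtain ⟨C1, hC10, hC1⟩ := interp2 hs0 hs1 K hK
    obtain ⟨C, hC0, hC⟩ := ih (Real.sqrt θ) hs0 hs1 (fun j => K (j+1)) (fun j => hK _)
    refine ⟨C * C1 ^ Real.sqrt θ, by positivity, ?_⟩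
    intro g x hg hb a ha y hy
    have ha0 : 0 ≤ a := (abs_nonneg _).trans (ha y hy)
    have := hC (deriv g) x (smooth_deriv hg) (fun j y hy => by
      rw [← iteratedDeriv_succ']; exact hb (j+1) y hy) _ (hC1 g x hg hb a ha) y hy
    rw [iteratedDeriv_succ']
    refine this.trans (le_of_eq ?_)
    rw [Real.mul_rpow hC10 (by positivity), ← Real.rpow_mul ha0, Real.mul_self_sqrt h0.le]
    ring

lemma interp_final (j : ℕ) {θ : ℝ} (h0 : 0 < θ) (h1 : θ < 1) (K : ℕ → ℝ) (hK : ∀ j, 0 ≤ K j) :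
    ∃ C, 0 ≤ C ∧ ∀ (g : ℝ → ℝ),
    ContDiff ℝ (⊤ : ℕ∞) g → (∀ j y, |iteratedDeriv j g y| ≤ K j) → ∀ x,
      |iteratedDeriv (j+1) g x| ≤ C * (∫ s in x..(x+1), |deriv g s|) ^ θ := by
  obtain ⟨C, hC0, hC⟩ := interp3 j θ h0 h1 (fun j => 2 * K j) (fun j => by linarith [hK j])
  refine ⟨C, hC0, ?_⟩
  intro g hg hb x
  have hgs : ContDiff ℝ (⊤ : ℕ∞) (fun y => g y - g x) := hg.sub contDiff_const
  have hd : deriv (fun y => g y - g x) = deriv g := by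
    funext y; simp
  have hc : Continuous (deriv g) := (smooth_deriv hg).continuous
  have := hC (fun y => g y - g x) x hgs ?_ (∫ s in x..(x+1), |deriv g s|) ?_ x ⟨le_rfl, by linarith⟩
  · rw [iteratedDeriv_succ', hd, ← iteratedDeriv_succ'] at this
    exact this
  · intro i y hy
    rcases i with _ | i
    · rw [iteratedDeriv_zero]
      have e1 := hb 0 y
      have e2 := hb 0 x
      rw [iteratedDeriv_zero] at e1 e2
      exact (abs_sub _ _).trans (by linarith)
    · rw [iteratedDeriv_succ', hd, ← iteratedDeriv_succ']
      linarith [hb (i+1) y, hK (i+1)]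
  · intro y hy
    have e : g y - g x = ∫ s in x..y, deriv g s := by
      rw [intervalIntegral.integral_deriv_eq_sub (fun x _ => hg.differentiable (by simp) x)
        (hc.intervalIntegrable _ _)]
    rw [e]
    refine (intervalIntegral.abs_integral_le_integral_abs hy.1).trans ?_
    exact intervalIntegral.integral_mono_interval le_rfl hy.1 hy.2
      (Filter.Eventually.of_forall fun _ => abs_nonneg _) (hc.abs.intervalIntegrable _ _)

/-! ### Part H: upper bounds -/

lemma sobLp_eq {m : ℕ} {v : ℝ → ℝ} (hv : Continuous (iteratedDeriv m v))
    (hper : ∀ x, v (x + 1) = v x) {p : ℝ≥0∞} (hp0 : p ≠ 0) (hp : p ≠ ⊤) :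
    sobLp m p v = (∫ x in Ioc (0:ℝ) 1, |iteratedDeriv m v x| ^ p.toReal) ^ (p.toReal)⁻¹ := by
  have hmem : MemLp (iteratedDeriv m v) p (volume.restrict (Ioc (0:ℝ) 1)) :=
    ⟨hv.aestronglyMeasurable,
      (eLpNorm_unit_ne_top hv (fun x => iteratedDeriv_periodic hper m x) p).lt_top⟩
  unfold sobLp
  rw [hmem.eLpNorm_eq_integral_rpow_norm hp0 hp, ENNReal.toReal_ofReal]
  · rfl
  · apply Real.rpow_nonneg
    exact integral_nonneg fun _ => Real.rpow_nonneg (norm_nonneg _) _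

lemma shift_avg {W : ℝ → ℝ} (hW : Continuous W) (hper : ∀ x, W (x + 1) = W x) (ν : ℝ) :
    ∫ x in (0:ℝ)..1, ∫ s in (0:ℝ)..1, W (x + ν * s) = ∫ x in (0:ℝ)..1, W x := by
  have hswap : ∫ x in (0:ℝ)..1, ∫ s in (0:ℝ)..1, W (x + ν * s)
      = ∫ s in (0:ℝ)..1, ∫ x in (0:ℝ)..1, W (x + ν * s) := by
    simp only [intervalIntegral.integral_of_le (zero_le_one (α := ℝ))]
    apply integral_integral_swap
    have hc : Continuous (Function.uncurry fun x s => W (x + ν * s)) := by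
      unfold Function.uncurry; fun_prop
    have h1 : IntegrableOn (Function.uncurry fun x s => W (x + ν * s))
        (Icc (0:ℝ) 1 ×ˢ Icc (0:ℝ) 1) (volume.prod volume) :=
      hc.continuousOn.integrableOn_compact (isCompact_Icc.prod isCompact_Icc)
    rw [Measure.prod_restrict]
    exact h1.mono_set (prod_mono Ioc_subset_Icc_self Ioc_subset_Icc_self)
  rw [hswap]
  have : ∀ s, ∫ x in (0:ℝ)..1, W (x + ν * s) = ∫ x in (0:ℝ)..1, W x := by
    intro s
    rw [intervalIntegral.integral_comp_add_right (fun x => W x)]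
    have hp : Function.Periodic W 1 := hper
    have := hp.intervalIntegral_add_eq (ν * s) 0
    rw [zero_add] at this ⊢
    rw [← this, add_comm]
  simp [this]

lemma rescale_int {v : ℝ → ℝ} (hv : ContDiff ℝ (⊤ : ℕ∞) v) {ν : ℝ} (hν : 0 < ν) (x : ℝ) :
    ∫ s in (x/ν)..(x/ν+1), |deriv (fun y => v (ν * y)) s|
      = ν * ∫ s in (0:ℝ)..1, |deriv v (x + ν * s)| := by
  have e : ∀ s, deriv (fun y => v (ν * y)) s = ν * deriv v (ν * s) := by
    intro s
    rw [deriv_comp_mul_left]; rfl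
  have h1 := intervalIntegral.integral_comp_add_right (a := (0:ℝ)) (b := 1)
    (fun s => |deriv (fun y => v (ν * y)) s|) (x/ν)
  rw [zero_add, add_comm 1] at h1
  rw [← h1, ← intervalIntegral.integral_const_mul]
  congr 1
  funext s
  rw [e, abs_mul, abs_of_pos hν]
  congr 3
  field_simp
  ring

lemma sobLp_upper {m : ℕ} {v : ℝ → ℝ} (hv : ContDiff ℝ (⊤ : ℕ∞) v)
    (hper : ∀ x, v (x + 1) = v x) {p : ℝ≥0∞} (hp1 : 1 ≤ p) (hp : p ≠ ⊤) {ν C M : ℝ} (hν : 0 < ν)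
    (hC : 0 ≤ C) (hM : ∫ x in Ioc (0:ℝ) 1, |deriv v x| ≤ M)
    (hb : ∀ y, |iteratedDeriv m (fun y => v (ν * y)) y|
      ≤ C * (∫ s in y..(y+1), |deriv (fun y => v (ν * y)) s|) ^ (p.toReal)⁻¹) :
    sobLp m p v ≤ C * M ^ (p.toReal)⁻¹ * ν ^ (-((m:ℝ) - (p.toReal)⁻¹)) := by
  have hp0 : p ≠ 0 := (zero_lt_one.trans_le hp1).ne'
  have hpr : 0 < p.toReal := ENNReal.toReal_pos hp0 hp
  set q := p.toReal with hq
  have hvm : Continuous (iteratedDeriv m v) := (smooth_iteratedDeriv hv m).continuous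
  have hdc : Continuous (deriv v) := (smooth_deriv hv).continuous
  set a : ℝ → ℝ := fun x => ∫ s in (0:ℝ)..1, |deriv v (x + ν * s)| with ha
  have ha0 : ∀ x, 0 ≤ a x := fun x =>
    intervalIntegral.integral_nonneg zero_le_one fun _ _ => abs_nonneg _
  have hac : Continuous a := by
    apply intervalIntegral.continuous_parametric_intervalIntegral_of_continuous'
    unfold Function.uncurry; fun_prop
  have hM0 : 0 ≤ M := le_trans (integral_nonneg fun _ => abs_nonneg _) hM
  have haM : ∫ x in Ioc (0:ℝ) 1, a x ≤ M := by
    rw [← intervalIntegral.integral_of_le zero_le_one]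
    rw [ha, shift_avg (W := fun x => |deriv v x|) (by fun_prop) (fun x => by
      have := iteratedDeriv_periodic hper 1 x
      rw [iteratedDeriv_one] at this
      simp only [this]), intervalIntegral.integral_of_le zero_le_one]
    exact hM
  have hpt : ∀ x, |iteratedDeriv m v x| ^ q ≤ (C * (ν^m)⁻¹) ^ q * ν * a x := by
    intro x
    have h1 := hb (x/ν)
    rw [rescale_iter (u := fun _ => v) (t := 0) hv, rescale_int hv hν] at h1
    rw [mul_div_cancel₀ _ hν.ne', abs_mul, abs_of_pos (pow_pos hν m)] at h1
    have h2 : |iteratedDeriv m v x| ≤ (C * (ν^m)⁻¹) * (ν * a x) ^ q⁻¹ := by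
      have : |iteratedDeriv m v x| = (ν^m)⁻¹ * (ν^m * |iteratedDeriv m v x|) := by
        field_simp
      rw [this]
      calc _ ≤ (ν^m)⁻¹ * (C * (ν * a x) ^ q⁻¹) := by
            apply mul_le_mul_of_nonneg_left h1; positivity
        _ = _ := by ring
    have h3 := Real.rpow_le_rpow (abs_nonneg _) h2 hpr.le
    rw [Real.mul_rpow (by positivity) (by have := ha0 x; positivity),
      ← Real.rpow_mul (by have := ha0 x; positivity), inv_mul_cancel₀ hpr.ne', Real.rpow_one] at h3
    linarith
  have hintegral : ∫ x in Ioc (0:ℝ) 1, |iteratedDeriv m v x| ^ q ≤ (C * (ν^m)⁻¹) ^ q * ν * M := by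
    calc _ ≤ ∫ x in Ioc (0:ℝ) 1, (C * (ν^m)⁻¹) ^ q * ν * a x := by
          refine integral_mono (integrableOn_unit ?_) (integrableOn_unit (by fun_prop)) hpt
          exact hvm.abs.rpow_const (fun _ => Or.inr hpr.le)
      _ = (C * (ν^m)⁻¹) ^ q * ν * ∫ x in Ioc (0:ℝ) 1, a x := integral_const_mul _ _
      _ ≤ _ := by
          apply mul_le_mul_of_nonneg_left haM; positivity
  rw [sobLp_eq hvm hper hp0 hp, ← hq]
  refine (Real.rpow_le_rpow (integral_nonneg fun _ => Real.rpow_nonneg (abs_nonneg _) _) hintegral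
    (by positivity)).trans (le_of_eq ?_)
  rw [Real.mul_rpow (by positivity) hM0, Real.mul_rpow (by positivity) hν.le,
    ← Real.rpow_mul (by positivity), mul_inv_cancel₀ hpr.ne', Real.rpow_one,
    neg_sub, Real.rpow_sub hν, Real.rpow_natCast]
  ring

lemma upper_bound {f : ℝ → ℝ} (hf : ContDiff ℝ (⊤ : ℕ∞) f) (D : ℝ) {τ : ℝ} (hτ : 0 < τ)
    (m : ℕ) (p : ℝ≥0∞) (hmp : (m ≤ 1 ∧ 1 ≤ p) ∨ (2 ≤ m ∧ 1 < p)) :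
    ∃ C, 0 < C ∧ ∀ (σ ν : ℝ) (u : ℝ → ℝ → ℝ),
      IsBurgersSolution f σ ν u → ν ≤ 1 → burgersD u = D → ∀ t, τ ≤ t →
        sobLp m p (u t) ≤ C * ν ^ (-(max 0 ((m : ℝ) - (1 / p).toReal))) := by
  have hp1 : 1 ≤ p := by rcases hmp with h | h; exacts [h.2, h.2.le]
  rcases Nat.eq_zero_or_pos m with rfl | hm
  · refine ⟨|D| + 1, by positivity, ?_⟩
    intro σ ν u h hν hD t ht
    have h0 : max 0 (((0:ℕ):ℝ) - (1/p).toReal) = 0 := by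
      have : 0 ≤ (1/p).toReal := ENNReal.toReal_nonneg
      rw [max_eq_left]; push_cast; linarith
    rw [h0, neg_zero, Real.rpow_zero, mul_one]
    refine sobLp_le_of_bound (by positivity) (fun x => ?_)
    rw [iteratedDeriv_zero]
    have := h.u_bound hD (hτ.le.trans ht) x
    linarith [le_abs_self D]
  have hm1 : (1:ℝ) ≤ m := by exact_mod_cast hm
  obtain ⟨K, hK0, hK⟩ := deriv_bounds hf D hτ
  have hinvle : (1/p).toReal ≤ 1 := by
    have : 1/p ≤ 1 := by rw [one_div]; exact ENNReal.inv_le_one.2 hp1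
    exact ENNReal.toReal_le_of_le_ofReal zero_le_one (by simpa using this)
  rw [max_eq_right (by linarith)]
  by_cases hpt : p = ⊤
  · subst hpt
    refine ⟨K m + 1, by have := hK0 m; positivity, ?_⟩
    intro σ ν u h hν hD t ht
    have hνp := h.hν
    have hKm := hK0 m
    rw [one_div, ENNReal.inv_top, ENNReal.toReal_zero, sub_zero, Real.rpow_neg hνp.le,
      Real.rpow_natCast]
    refine sobLp_le_of_bound (by positivity) (fun x => ?_)
    have h1 := hK σ ν u h hν hD t ht m (x/ν)
    rw [rescale_iter (h.slice (hτ.le.trans ht)), mul_div_cancel₀ _ hνp.ne', abs_mul,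
      abs_of_pos (pow_pos hνp m)] at h1
    rw [← div_eq_mul_inv, le_div_iff₀ (pow_pos hνp m)]
    linarith
  have hinv : (1/p).toReal = (p.toReal)⁻¹ := by rw [one_div, ENNReal.toReal_inv]
  rw [hinv]
  have hpr : 0 < p.toReal := ENNReal.toReal_pos (zero_lt_one.trans_le hp1).ne' hpt
  by_cases hp11 : p = 1
  · subst hp11
    have hm1' : m = 1 := by
      rcases hmp with h | h
      · omega
      · exact absurd h.2 (lt_irrefl _)
    subst hm1'
    refine ⟨2 * |D| + 1, by positivity, ?_⟩
    intro σ ν u h hν hD t ht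
    have ht0 := hτ.le.trans ht
    rw [sobLp_one (smooth_iteratedDeriv (h.slice ht0) 1).continuous]
    simp only [iteratedDeriv_one]
    have := h.ux_l1 hD ht0
    simp only [Nat.cast_one, ENNReal.toReal_one, inv_one, sub_self, neg_zero, Real.rpow_zero]
    linarith [le_abs_self D]
  have hp1' : 1 < p.toReal := by
    have : (1:ℝ≥0∞) < p := lt_of_le_of_ne hp1 (Ne.symm hp11)
    have := (ENNReal.toReal_lt_toReal (by simp) hpt).2 this
    simpa using this
  obtain ⟨j, rfl⟩ : ∃ j, m = j + 1 := ⟨m-1, by omega⟩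
  obtain ⟨C, hC0, hC⟩ := interp_final j (θ := (p.toReal)⁻¹) (by positivity)
    (inv_lt_one_of_one_lt₀ hp1') K hK0
  refine ⟨C * (2*|D|) ^ (p.toReal)⁻¹ + 1, by positivity, ?_⟩
  intro σ ν u h hν hD t ht
  have ht0 := hτ.le.trans ht
  have hνp := h.hν
  have hsm : ContDiff ℝ (⊤ : ℕ∞) (fun y => u t (ν * y)) := (h.slice ht0).comp (by fun_prop)
  have := sobLp_upper (m := j+1) (h.slice ht0) (h.hper t) hp1 hpt hνp hC0
    (M := 2 * |D|) ((h.ux_l1 hD ht0).trans (by linarith [le_abs_self D]))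
    (hC _ hsm (hK σ ν u h hν hD t ht))
  refine this.trans ?_
  apply mul_le_mul_of_nonneg_right _ (Real.rpow_nonneg hνp.le _)
  linarith

/-! ### Part I: the energy identity -/

lemma cont_param {W : ℝ → ℝ → ℝ} (hW : ContinuousOn (Function.uncurry W) (Ici (0:ℝ) ×ˢ univ)) :
    ContinuousOn (fun t => ∫ x in (0:ℝ)..1, W t x) (Ici 0) := by
  have h1 : Continuous (Function.uncurry fun t x => W (max t 0) x) := by
    have hc : Continuous (fun z : ℝ × ℝ => (max z.1 0, z.2)) := by fun_prop
    have := hW.comp_continuous hc (fun z => ⟨mem_Ici.2 (le_max_right z.1 0), mem_univ _⟩)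
    exact this
  have h2 : Continuous (fun t => ∫ x in (0:ℝ)..1, W (max t 0) x) :=
    intervalIntegral.continuous_parametric_intervalIntegral_of_continuous' h1 0 1
  refine h2.continuousOn.congr ?_
  intro t ht
  simp only
  rw [max_eq_left ht]

lemma hasDerivAt_param {W : ℝ → ℝ → ℝ} (hW : SmoothPos W) {t : ℝ} (ht : 0 < t) :
    HasDerivAt (fun t => ∫ x in (0:ℝ)..1, W t x) (∫ x in (0:ℝ)..1, dT W t x) t := by
  have hcont := hW.continuousOn
  have hcontT := hW.dT.continuousOn
  have hsl : ∀ s, 0 < s → Continuous (W s) := fun s hs => (hW.slice hs).continuous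
  have hslT : ∀ s, 0 < s → Continuous (dT W s) := fun s hs => (hW.dT.slice hs).continuous
  obtain ⟨C, hC⟩ := ((isCompact_Icc (a := t/2) (b := 3*t/2)).prod
    (isCompact_Icc (a := (0:ℝ)) (b := 1))).exists_bound_of_continuousOn
      (f := Function.uncurry (dT W)) (hcontT.mono (fun z hz => ⟨by
        have := hz.1.1
        show 0 < z.1
        linarith, mem_univ _⟩))
  have hs : Ioo (t/2) (3*t/2) ∈ nhds t := Ioo_mem_nhds (by linarith) (by linarith)
  refine (intervalIntegral.hasDerivAt_integral_of_dominated_loc_of_deriv_le (bound := fun _ => C)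
    (F := W) (F' := dT W) (x₀ := t) hs ?_ ?_ ?_ ?_ ?_ ?_).2
  · filter_upwards [hs] with s hs
    exact (hsl s (by linarith [hs.1])).aestronglyMeasurable
  · exact (hsl t ht).intervalIntegrable _ _
  · exact (hslT t ht).aestronglyMeasurable
  · refine Filter.Eventually.of_forall fun x hx s hs => ?_
    rw [uIoc_of_le zero_le_one] at hx
    exact hC (s, x) ⟨⟨hs.1.le, hs.2.le⟩, ⟨hx.1.le, hx.2⟩⟩
  · exact intervalIntegrable_const
  · refine Filter.Eventually.of_forall fun x _ s hs => ?_
    exact hW.hasDerivAt_dT (by linarith [hs.1]) x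

/-- energy -/
noncomputable def enE (u : ℝ → ℝ → ℝ) (t : ℝ) : ℝ := ∫ x in (0:ℝ)..1, (u t x)^2

/-- dissipation -/
noncomputable def disQ (ν : ℝ) (u : ℝ → ℝ → ℝ) (t : ℝ) : ℝ := ν * ∫ x in (0:ℝ)..1, (dX u t x)^2

namespace IsBurgersSolution

variable {f : ℝ → ℝ} {σ ν D : ℝ} {u : ℝ → ℝ → ℝ}

lemma enE_cont (h : IsBurgersSolution f σ ν u) : ContinuousOn (enE u) (Ici 0) :=
  cont_param (W := fun t x => (u t x)^2) (h.cont_u.pow 2)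

lemma disQ_cont (h : IsBurgersSolution f σ ν u) : ContinuousOn (disQ ν u) (Ici 0) :=
  continuousOn_const.mul (cont_param (W := fun t x => (dX u t x)^2) (h.cont_ux.pow 2))

lemma int_zero (h : IsBurgersSolution f σ ν u) {t : ℝ} (ht : 0 < t) :
    ∫ x in (0:ℝ)..1, (2 * ν * (dXn u 1 t x)^2 + 2 * u t x * dT u t x) = 0 := by
  have hc : Continuous (fun s => 2 * s * deriv f s) := by
    have : Continuous (deriv f) := (smooth_deriv h.hf).continuous
    fun_prop
  have hG : ∀ y, HasDerivAt (fun y => ∫ s in (0:ℝ)..y, 2 * s * deriv f s) (2 * y * deriv f y) y :=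
    fun y => (hc.integral_hasStrictDerivAt 0 y).hasDerivAt
  set G : ℝ → ℝ := fun y => ∫ s in (0:ℝ)..y, 2 * s * deriv f s with hGdef
  have hu1 : ∀ x, HasDerivAt (u t) (dXn u 1 t x) x := fun x => by
    have := h.hasDerivAt_succ 0 ht x
    simpa [dXn_zero] using this
  have hd : ∀ x, HasDerivAt (fun x => 2 * ν * (u t x * dXn u 1 t x) - G (u t x))
      (2 * ν * (dXn u 1 t x)^2 + 2 * u t x * dT u t x) x := by
    intro x
    have h2 := h.hasDerivAt_succ 1 ht x
    have h3 := (((hu1 x).mul h2).const_mul (2 * ν)).sub ((hG (u t x)).comp x (hu1 x))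
    refine h3.congr_deriv ?_
    rw [h.dT_u ht x]
    ring
  rw [intervalIntegral.integral_eq_sub_of_hasDerivAt (fun x _ => hd x)]
  · have e1 := h.hper t 0
    have e2 := h.dper 1 t 0
    rw [zero_add] at e1 e2
    rw [e1, e2, sub_self]
  · apply Continuous.intervalIntegrable
    have c1 := (h.smoothPos.slice ht).continuous
    have c2 := ((h.smoothPos.dXn 1).slice ht).continuous
    have c3 := (h.smoothPos.dT.slice ht).continuous
    fun_prop

lemma enE_deriv (h : IsBurgersSolution f σ ν u) {t : ℝ} (ht : 0 < t) :
    HasDerivAt (enE u) (-2 * disQ ν u t) t := by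
  have hW : SmoothPos (fun t x => (u t x)^2) := by
    have : ContDiffOn ℝ (⊤ : ℕ∞) (Function.uncurry u) Om := h.smoothPos
    exact this.pow 2
  have h1 := hasDerivAt_param hW ht
  refine h1.congr_deriv ?_
  have e : ∀ x, dT (fun t x => (u t x)^2) t x = 2 * u t x * dT u t x := by
    intro x
    have := ((h.smoothPos.hasDerivAt_dT ht x).pow 2).deriv
    unfold dT at this ⊢
    simp only [Pi.pow_def] at this
    rw [this]
    push_cast
    ring
  simp only [e]
  have h2 := h.int_zero ht
  have c1 := (h.smoothPos.slice ht).continuous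
  have c2 := ((h.smoothPos.dXn 1).slice ht).continuous
  have c3 := (h.smoothPos.dT.slice ht).continuous
  rw [intervalIntegral.integral_add (Continuous.intervalIntegrable (by fun_prop) _ _)
    (Continuous.intervalIntegrable (by fun_prop) _ _), intervalIntegral.integral_const_mul,
    dXn_one] at h2
  unfold disQ
  linarith

lemma energy_id (h : IsBurgersSolution f σ ν u) {a b : ℝ} (ha : 0 ≤ a) (hab : a ≤ b) :
    enE u a - enE u b = 2 * ∫ t in a..b, disQ ν u t := by
  have hsub : Icc a b ⊆ Ici (0:ℝ) := fun x hx => ha.trans hx.1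
  have h1 := intervalIntegral.integral_eq_sub_of_hasDerivAt_of_le hab (h.enE_cont.mono hsub)
    (fun x hx => h.enE_deriv (ha.trans_lt hx.1)) (by
      apply ContinuousOn.intervalIntegrable
      rw [uIcc_of_le hab]
      exact continuousOn_const.mul (h.disQ_cont.mono hsub))
  rw [intervalIntegral.integral_const_mul] at h1
  linarith

lemma disQ_eq (h : IsBurgersSolution f σ ν u) {t : ℝ} (ht : 0 ≤ t) :
    disQ ν u t = ν * sobLp 1 2 (u t) ^ 2 := by
  have hc := (smooth_iteratedDeriv (h.slice ht) 1).continuous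
  unfold disQ
  rw [sobLp_eq hc (h.hper t) (by simp) (by simp), ← Real.rpow_natCast, ← Real.rpow_mul
    (integral_nonneg fun _ => Real.rpow_nonneg (abs_nonneg _) _)]
  rw [intervalIntegral.integral_of_le zero_le_one]
  simp [iteratedDeriv_one, dX]

lemma enE_zero (h : IsBurgersSolution f σ ν u) (hD : burgersD u = D) : (D^2)⁻¹ ≤ enE u 0 := by
  have hc : Continuous (u 0) := (h.slice le_rfl).continuous
  have h1 := h.l1_ge hD
  have hD0 := h.D_pos hD
  rw [sobLp_one (by simpa using hc), ← intervalIntegral.integral_of_le zero_le_one] at h1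
  simp only [iteratedDeriv_zero] at h1
  set c := ∫ x in (0:ℝ)..1, |u 0 x| with hcdef
  have h2 : 0 ≤ ∫ x in (0:ℝ)..1, (|u 0 x| - c)^2 :=
    intervalIntegral.integral_nonneg zero_le_one fun _ _ => sq_nonneg _
  have e : ∀ x, (|u 0 x| - c)^2 = ((u 0 x)^2 - 2 * c * |u 0 x|) + c^2 := by
    intro x; rw [← sq_abs (u 0 x)]; ring
  simp only [e] at h2
  rw [intervalIntegral.integral_add (Continuous.intervalIntegrable (by fun_prop) _ _)
    (Continuous.intervalIntegrable (by fun_prop) _ _), intervalIntegral.integral_sub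
    (Continuous.intervalIntegrable (by fun_prop) _ _)
    (Continuous.intervalIntegrable (by fun_prop) _ _), intervalIntegral.integral_const_mul,
    intervalIntegral.integral_const, ← hcdef] at h2
  have h3 : (D⁻¹)^2 ≤ c^2 := pow_le_pow_left₀ (by positivity) h1 2
  rw [inv_pow] at h3
  unfold enE
  simp at h2
  nlinarith

lemma enE_lower (h : IsBurgersSolution f σ ν u) (hD : burgersD u = D) {Ct : ℝ}
    (hCt : ∀ t, 0 ≤ t → sobLp 1 2 (u t) ^ 2 ≤ Ct * ν⁻¹) {t : ℝ} (ht : 0 ≤ t) :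
    (D^2)⁻¹ - 2 * Ct * t ≤ enE u t := by
  have h1 := h.energy_id le_rfl ht
  have h2 := h.enE_zero hD
  have h3 : ∫ s in (0:ℝ)..t, disQ ν u s ≤ ∫ s in (0:ℝ)..t, Ct := by
    apply intervalIntegral.integral_mono_on ht
    · apply ContinuousOn.intervalIntegrable
      rw [uIcc_of_le ht]
      exact h.disQ_cont.mono Icc_subset_Ici_self
    · exact intervalIntegrable_const
    · intro s hs
      rw [h.disQ_eq hs.1]
      have := mul_le_mul_of_nonneg_left (hCt s hs.1) h.hν.le
      refine this.trans (le_of_eq ?_)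
      have := h.hν.ne'
      field_simp
  rw [intervalIntegral.integral_const, smul_eq_mul, sub_zero] at h3
  linarith

lemma enE_upper (h : IsBurgersSolution f σ ν u) {t : ℝ} (ht : 0 < t) :
    enE u t ≤ (1 / (σ * t))^2 := by
  have hb := mean_zero_bound (h.slice ht.le) (h.hper t) (h.hmean t ht.le) (fun x => h.oleinik2 ht x)
  have hc := (h.slice ht.le).continuous
  unfold enE
  calc _ ≤ ∫ x in (0:ℝ)..1, (1 / (σ * t))^2 := by
        apply intervalIntegral.integral_mono_on zero_le_one
        · exact Continuous.intervalIntegrable (by fun_prop) _ _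
        · exact intervalIntegrable_const
        · intro x _
          rw [← sq_abs]
          exact pow_le_pow_left₀ (abs_nonneg _) (hb x) 2
    _ = _ := by simp

lemma T1_pos {D Ct : ℝ} (hD : 0 < D) (hCt : 0 < Ct) : 0 < burgersT₁ D Ct := by
  unfold burgersT₁; positivity

lemma T1_eq {D Ct : ℝ} (hCt : 0 < Ct) : Ct * burgersT₁ D Ct = (D^2)⁻¹ / 4 := by
  unfold burgersT₁; field_simp

lemma enE_mid (h : IsBurgersSolution f σ ν u) (hD : burgersD u = D) {Ct : ℝ} (hCt0 : 0 < Ct)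
    (hCt : ∀ t, 0 ≤ t → sobLp 1 2 (u t) ^ 2 ≤ Ct * ν⁻¹) {t : ℝ} (ht : 0 ≤ t)
    (ht2 : t ≤ 3/2 * burgersT₁ D Ct) : (D^2)⁻¹ / 4 ≤ enE u t := by
  have h1 := h.enE_lower hD hCt ht
  have h2 := T1_eq (D := D) hCt0
  nlinarith

lemma dis_lower (h : IsBurgersSolution f σ ν u) (hD : burgersD u = D) {Ct : ℝ} (hCt0 : 0 < Ct)
    (hCt : ∀ t, 0 ≤ t → sobLp 1 2 (u t) ^ 2 ≤ Ct * ν⁻¹) :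
    (D^2)⁻¹ / 8 ≤ ∫ t in (burgersT₁ D Ct)..(burgersT₂ σ D Ct), disQ ν u t := by
  have hDp := h.D_pos hD
  have hσ := h.hσ
  have hT1 := T1_pos hDp hCt0
  have hle : burgersT₁ D Ct ≤ burgersT₂ σ D Ct := by
    refine le_trans ?_ (le_max_left _ _)
    linarith
  have hT2 := hT1.trans_le hle
  have h0 := h.energy_id hT1.le hle
  have h1 := h.enE_lower hD hCt hT1.le
  have h2 := T1_eq (D := D) hCt0
  have h3 := h.enE_upper hT2
  have h4 : 2 * D ≤ σ * burgersT₂ σ D Ct := by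
    have : 2 * D * σ⁻¹ ≤ burgersT₂ σ D Ct := le_max_right _ _
    have := mul_le_mul_of_nonneg_left this hσ.le
    refine le_trans (le_of_eq ?_) this
    field_simp
  have h5 : (1 / (σ * burgersT₂ σ D Ct))^2 ≤ (1 / (2 * D))^2 := by
    apply pow_le_pow_left₀ (by positivity)
    exact one_div_le_one_div_of_le (by positivity) h4
  have h6 : (1 / (2 * D))^2 = (D^2)⁻¹ / 4 := by field_simp; norm_num
  nlinarith

end IsBurgersSolution

/-! ### Part J: lower bounds -/

lemma avg_lower {a b α K K' c0 κ : ℝ} (hab : a < b) (hα : 0 < α) (hK : 0 < K) (hK' : 0 < K')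
    (hc0 : 0 < c0) (hκ : 0 < κ) : ∃ c, 0 < c ∧ ∀ A q : ℝ → ℝ, (∀ t ∈ Icc a b, 0 ≤ A t) →
      ContinuousOn A (Icc a b) → ContinuousOn q (Icc a b) → (∀ t ∈ Icc a b, q t ≤ K) →
      (∀ t ∈ Icc a b, q t ≤ K' * A t ^ κ) → c0 ≤ ∫ t in a..b, q t →
      c ≤ (timeAvg a b (fun t => A t ^ α)) ^ (1/α) := by
  have hba : 0 < b - a := sub_pos.2 hab
  set thr := c0 / (2 * (b - a)) with hthr
  have hthr0 : 0 < thr := by positivity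
  set δ := (thr / K') ^ (1/κ) with hδ
  have hδ0 : 0 < δ := by positivity
  refine ⟨((b-a)⁻¹ * (δ^α / K * (c0/2))) ^ (1/α), by positivity, ?_⟩
  intro A q hA hAc hqc hqK hqA hq
  apply Real.rpow_le_rpow (by positivity) _ (by positivity)
  unfold timeAvg
  apply mul_le_mul_of_nonneg_left _ (by positivity)
  have hqi : IntervalIntegrable q volume a b :=
    ContinuousOn.intervalIntegrable (by rwa [uIcc_of_le hab.le])
  have hAi : IntervalIntegrable (fun t => A t ^ α) volume a b :=
    ContinuousOn.intervalIntegrable (by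
      rw [uIcc_of_le hab.le]
      exact hAc.rpow_const (fun _ _ => Or.inr hα.le))
  have hmono : ∫ t in a..b, δ^α / K * (q t - thr) ≤ ∫ t in a..b, A t ^ α := by
    apply intervalIntegral.integral_mono_on hab.le
    · exact (hqi.sub intervalIntegrable_const).const_mul _
    · exact hAi
    · intro t ht
      have hAt := hA t ht
      rcases le_total (q t) thr with h1 | h1
      · have : δ^α / K * (q t - thr) ≤ 0 :=
          mul_nonpos_of_nonneg_of_nonpos (by positivity) (by linarith)
        exact this.trans (Real.rpow_nonneg hAt _)
      · have h2 : thr / K' ≤ A t ^ κ := by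
          rw [div_le_iff₀ hK']
          linarith [hqA t ht]
        have h3 : δ ≤ A t := by
          have := Real.rpow_le_rpow (by positivity) h2 (z := 1/κ) (by positivity)
          rwa [← Real.rpow_mul hAt, mul_one_div_cancel hκ.ne', Real.rpow_one] at this
        have h4 : δ^α ≤ A t ^ α := Real.rpow_le_rpow hδ0.le h3 hα.le
        refine le_trans ?_ h4
        have h5 : q t - thr ≤ K := by linarith [hqK t ht]
        calc δ^α / K * (q t - thr) ≤ δ^α / K * K :=
              mul_le_mul_of_nonneg_left h5 (by positivity)
          _ = δ^α := by field_simp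
  refine le_trans ?_ hmono
  rw [intervalIntegral.integral_const_mul, intervalIntegral.integral_sub hqi
    intervalIntegrable_const, intervalIntegral.integral_const, smul_eq_mul]
  apply mul_le_mul_of_nonneg_left _ (by positivity)
  have : (b - a) * thr = c0 / 2 := by rw [hthr]; field_simp
  linarith

lemma avg_upper {a b α C : ℝ} (hab : a < b) (hα : 0 < α) (hC : 0 ≤ C) {A : ℝ → ℝ}
    (hA : ∀ t ∈ Icc a b, 0 ≤ A t) (hAc : ContinuousOn A (Icc a b))
    (hAC : ∀ t ∈ Icc a b, A t ≤ C) : (timeAvg a b (fun t => A t ^ α)) ^ (1/α) ≤ C := by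
  have hba : 0 < b - a := sub_pos.2 hab
  have hAi : IntervalIntegrable (fun t => A t ^ α) volume a b :=
    ContinuousOn.intervalIntegrable (by
      rw [uIcc_of_le hab.le]
      exact hAc.rpow_const (fun _ _ => Or.inr hα.le))
  have h1 : ∫ t in a..b, A t ^ α ≤ ∫ t in a..b, C ^ α := by
    apply intervalIntegral.integral_mono_on hab.le hAi intervalIntegrable_const
    intro t ht
    exact Real.rpow_le_rpow (hA t ht) (hAC t ht) hα.le
  rw [intervalIntegral.integral_const, smul_eq_mul] at h1
  have h0 : 0 ≤ ∫ t in a..b, A t ^ α :=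
    intervalIntegral.integral_nonneg hab.le fun t ht => Real.rpow_nonneg (hA t ht) _
  have h2 : timeAvg a b (fun t => A t ^ α) ≤ C ^ α := by
    unfold timeAvg
    rw [inv_mul_le_iff₀ hba]
    exact h1
  have h3 := Real.rpow_le_rpow (by unfold timeAvg; positivity) h2 (z := 1/α) (by positivity)
  rwa [← Real.rpow_mul hC, mul_one_div_cancel hα.ne', Real.rpow_one] at h3

lemma avg_scale {a b α s : ℝ} (hab : a < b) (hα : 0 < α) (hs : 0 ≤ s) {A : ℝ → ℝ}
    (hA : ∀ t, 0 ≤ A t) :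
    (timeAvg a b (fun t => (s * A t) ^ α)) ^ (1/α)
      = s * (timeAvg a b (fun t => A t ^ α)) ^ (1/α) := by
  have hba : 0 < b - a := sub_pos.2 hab
  have h0 : 0 ≤ ∫ t in a..b, A t ^ α :=
    intervalIntegral.integral_nonneg hab.le fun t _ => Real.rpow_nonneg (hA t) _
  have h1 : timeAvg a b (fun t => (s * A t) ^ α) = s ^ α * timeAvg a b (fun t => A t ^ α) := by
    unfold timeAvg
    simp only [Real.mul_rpow hs (hA _)]
    rw [intervalIntegral.integral_const_mul]
    ring
  rw [h1, Real.mul_rpow (by positivity) (by unfold timeAvg; positivity), ← Real.rpow_mul hs,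
    mul_one_div_cancel hα.ne', Real.rpow_one]

lemma sobLp_sub_le {m : ℕ} {p : ℝ≥0∞} (hp : 1 ≤ p) {v w : ℝ → ℝ} {ε : ℝ} (hε : 0 ≤ ε)
    (hv : Continuous (iteratedDeriv m v)) (hw : Continuous (iteratedDeriv m w))
    (hpw : ∀ x, w (x + 1) = w x)
    (hvw : ∀ x, |iteratedDeriv m v x - iteratedDeriv m w x| ≤ ε) :
    sobLp m p v ≤ sobLp m p w + ε := by
  have hfin := eLpNorm_unit_ne_top hw (fun x => iteratedDeriv_periodic hpw m x) p
  have h1 := eLpNorm_add_le (μ := volume.restrict (Ioc (0:ℝ) 1)) hw.aestronglyMeasurable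
    (hv.sub hw).aestronglyMeasurable hp
  rw [add_sub_cancel] at h1
  have h2 := eLpNorm_unit_le (g := iteratedDeriv m v - iteratedDeriv m w) p hvw
  have h3 : eLpNorm (iteratedDeriv m v) p (volume.restrict (Ioc (0:ℝ) 1))
      ≤ eLpNorm (iteratedDeriv m w) p (volume.restrict (Ioc (0:ℝ) 1)) + ENNReal.ofReal ε :=
    h1.trans (by gcongr)
  have h4 := ENNReal.toReal_mono (by simp [hfin]) h3
  rw [ENNReal.toReal_add hfin (by simp), ENNReal.toReal_ofReal hε] at h4
  exact h4

lemma sobLp_cont {u : ℝ → ℝ → ℝ} (hu : SmoothPos u) (hper : ∀ t x, u t (x+1) = u t x)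
    (m : ℕ) {p : ℝ≥0∞} (hp : 1 ≤ p) : ContinuousOn (fun t => sobLp m p (u t)) (Ioi 0) := by
  rw [Metric.continuousOn_iff]
  intro t0 ht0 ε hε
  have ht0' : (0:ℝ) < t0 := ht0
  have hcpt := (isCompact_Icc (a := t0/2) (b := 2*t0)).prod (isCompact_Icc (a := (0:ℝ)) (b := 1))
  have huc := hcpt.uniformContinuousOn_of_continuous (f := Function.uncurry (dXn u m))
    ((hu.dXn m).continuousOn.mono (fun z hz => ⟨by
      have := hz.1.1
      show 0 < z.1
      linarith, mem_univ _⟩))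
  rw [Metric.uniformContinuousOn_iff] at huc
  obtain ⟨δ, hδ, hd⟩ := huc (ε/2) (by positivity)
  have hc : ∀ t, 0 < t → Continuous (iteratedDeriv m (u t)) := fun t ht =>
    ((hu.dXn m).slice ht).continuous
  refine ⟨min δ (t0/2), by positivity, ?_⟩
  intro t ht htd
  rw [Real.dist_eq] at htd ⊢
  have ht1 := abs_lt.1 (htd.trans_le (min_le_right _ _))
  have hdiff : ∀ x, |iteratedDeriv m (u t) x - iteratedDeriv m (u t0) x| ≤ ε/2 := by
    intro x
    obtain ⟨y, hy, hxy⟩ := periodic_to_unit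
      (g := fun x => iteratedDeriv m (u t) x - iteratedDeriv m (u t0) x) one_pos (fun x => by
        simp only [iteratedDeriv_periodic (hper _) m x]) x
    rw [hxy]
    have := hd (t, y) ⟨⟨by linarith [ht1.1], by linarith [ht1.2]⟩, hy⟩ (t0, y)
      ⟨⟨by linarith, by linarith⟩, hy⟩ (by
        rw [Prod.dist_eq]
        simp only [dist_self]
        rw [max_eq_left dist_nonneg]
        exact htd.trans_le (min_le_left _ _))
    exact this.le
  have h1 := sobLp_sub_le hp (by positivity) (hc t ht) (hc t0 ht0') (hper t0) hdiff
  have h2 := sobLp_sub_le (ε := ε/2) hp (by positivity) (hc t0 ht0') (hc t ht) (hper t) (fun x => by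
    rw [abs_sub_comm]; exact hdiff x)
  rw [abs_lt]
  constructor <;> linarith

lemma landau {g : ℝ → ℝ} (hg : ContDiff ℝ (⊤ : ℕ∞) g) {k a : ℝ} (hk : ∀ y, |g y| ≤ k)
    (ha : ∀ y, |deriv (deriv g) y| ≤ a) (y : ℝ) : |deriv g y|^2 ≤ 8 * k * a := by
  have hgd : Differentiable ℝ g := hg.differentiable (by simp)
  have hgd2 : Differentiable ℝ (deriv g) := (smooth_deriv hg).differentiable (by simp)
  have hk0 : 0 ≤ k := (abs_nonneg _).trans (hk y)
  have ha0 : 0 ≤ a := (abs_nonneg _).trans (ha y)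
  have main : ∀ h : ℝ, 0 ≤ a * (h * h) + (-|deriv g y|) * h + 2 * k := by
    intro h
    rcases le_or_gt h 0 with hh | hh
    · have : 0 ≤ -|deriv g y| * h := by
        have := mul_nonneg (abs_nonneg (deriv g y)) (neg_nonneg.2 hh)
        linarith
      have := mul_nonneg ha0 (mul_self_nonneg h)
      linarith
    · obtain ⟨ξ, hξ, hs⟩ := exists_deriv_eq_slope g (show y < y + h by linarith)
        hg.continuous.continuousOn hgd.differentiableOn
      have h1 : |deriv g ξ| * h ≤ 2 * k := by
        rw [hs, add_sub_cancel_left, abs_div, abs_of_pos hh, div_mul_cancel₀ _ hh.ne']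
        exact (abs_sub _ _).trans (by linarith [hk (y+h), hk y])
      have h2 := Convex.norm_image_sub_le_of_norm_deriv_le (f := deriv g) (C := a)
        (s := univ) (fun z _ => hgd2 z) (fun z _ => ha z) convex_univ (mem_univ ξ) (mem_univ y)
      rw [Real.norm_eq_abs, Real.norm_eq_abs] at h2
      have h3 : |y - ξ| ≤ h := by
        rw [abs_le]; constructor <;> linarith [hξ.1, hξ.2]
      have h4 : a * |y - ξ| ≤ a * h := mul_le_mul_of_nonneg_left h3 ha0
      have h5 := abs_sub_abs_le_abs_sub (deriv g y) (deriv g ξ)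
      have h6 : |deriv g y| ≤ |deriv g ξ| + a * h := by linarith
      have h7 := mul_le_mul_of_nonneg_right h6 hh.le
      nlinarith
  have := discrim_le_zero main
  unfold discrim at this
  nlinarith

lemma landau_iter (K : ℕ → ℝ) (hK : ∀ j, 0 ≤ K j) (n : ℕ) : ∃ C, 0 ≤ C ∧ ∀ (g : ℝ → ℝ),
    ContDiff ℝ (⊤ : ℕ∞) g → (∀ j y, |iteratedDeriv j g y| ≤ K j) →
    ∀ a, (∀ y, |iteratedDeriv (n+1) g y| ≤ a) → ∀ y, |deriv g y| ≤ C * a ^ ((1/2:ℝ)^n) := by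
  induction n with
  | zero =>
    refine ⟨1, zero_le_one, ?_⟩
    intro g hg hb a ha y
    have := ha y
    rw [zero_add, iteratedDeriv_one] at this
    simpa using this
  | succ n ih =>
    obtain ⟨C, hC, h⟩ := ih
    refine ⟨C * (8 * K n) ^ ((1/2:ℝ)^(n+1)), mul_nonneg hC (Real.rpow_nonneg (by linarith [hK n]) _), ?_⟩
    intro g hg hb a ha y
    have ha0 : 0 ≤ a := (abs_nonneg _).trans (ha y)
    have hKn := hK n
    have h1 := h g hg hb ((8 * K n * a) ^ (1/2:ℝ)) (fun y => by
      have h2 := landau (smooth_iteratedDeriv hg n) (hb n) (a := a) (fun y => by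
        rw [← iteratedDeriv_succ, ← iteratedDeriv_succ]; exact ha y) y
      rw [← iteratedDeriv_succ] at h2
      rw [← Real.sqrt_eq_rpow]
      exact Real.le_sqrt_of_sq_le h2) y
    refine h1.trans (le_of_eq ?_)
    rw [← Real.rpow_mul (by positivity), ← pow_succ', Real.mul_rpow (by positivity) ha0]
    ring

lemma lp_lower {m : ℕ} {v : ℝ → ℝ} (hv : ContDiff ℝ (⊤ : ℕ∞) v)
    (hper : ∀ x, v (x + 1) = v x) {p : ℝ≥0∞} (hp1 : 1 ≤ p) (hp : p ≠ ⊤) {ν B : ℝ} (hν : 0 < ν)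
    (hν1 : ν ≤ 1) (hB : 0 < B)
    (h0 : ∀ y, |iteratedDeriv m (fun y => v (ν * y)) y| ≤ B)
    (h1 : ∀ y, |iteratedDeriv (m+1) (fun y => v (ν * y)) y| ≤ B) (y : ℝ) :
    |iteratedDeriv m (fun y => v (ν * y)) y|
      ≤ (2 * B * 2 ^ p.toReal) ^ (1 / (p.toReal + 1))
        * (ν ^ ((m:ℝ) - (1/p).toReal) * sobLp m p v) ^ (p.toReal / (p.toReal + 1)) := by
  have hp0 : p ≠ 0 := (zero_lt_one.trans_le hp1).ne'
  have hq : 0 < p.toReal := ENNReal.toReal_pos hp0 hp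
  have hvm : Continuous (iteratedDeriv m v) := (smooth_iteratedDeriv hv m).continuous
  have hinv : (1/p).toReal = (p.toReal)⁻¹ := by rw [one_div, ENNReal.toReal_inv]
  rw [hinv, sobLp_eq hvm hper hp0 hp]
  generalize p.toReal = q at *
  set g : ℝ → ℝ := fun y => v (ν * y) with hg
  have hgs : ContDiff ℝ (⊤ : ℕ∞) g := hv.comp (by fun_prop)
  have hgm : ∀ y, iteratedDeriv m g y = ν^m * iteratedDeriv m v (ν * y) := fun y =>
    rescale_iter (u := fun _ => v) (t := 0) hv m y
  set a := |iteratedDeriv m g y| with ha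
  have ha0 : 0 ≤ a := abs_nonneg _
  set I := ∫ x in Ioc (0:ℝ) 1, |iteratedDeriv m v x| ^ q with hI
  have hI0 : 0 ≤ I := integral_nonneg fun _ => Real.rpow_nonneg (abs_nonneg _) _
  have hcq : Continuous (fun x => |iteratedDeriv m v x| ^ q) :=
    hvm.abs.rpow_const (fun _ => Or.inr hq.le)
  have hIs : I = ∫ x in (ν*y)..(ν*y+1), |iteratedDeriv m v x| ^ q := by
    have hpp : Function.Periodic (fun x => |iteratedDeriv m v x| ^ q) 1 := fun x => by
      simp only [iteratedDeriv_periodic hper m x]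
    rw [hpp.intervalIntegral_add_eq (ν*y) 0, zero_add,
      intervalIntegral.integral_of_le zero_le_one]
  set h := a * ν / (2*B) with hh
  have hh0 : 0 ≤ h := by positivity
  have hh1 : h ≤ 1 := by
    rw [hh, div_le_one (by positivity)]
    have := h0 y
    nlinarith
  have hlow : ∀ x ∈ Icc (ν*y) (ν*y+h), ((ν^m)⁻¹ * (a/2)) ^ q ≤ |iteratedDeriv m v x| ^ q := by
    intro x hx
    apply Real.rpow_le_rpow (by positivity) _ hq.le
    have hd : Differentiable ℝ (iteratedDeriv m g) :=
      (smooth_iteratedDeriv hgs m).differentiable (by simp)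
    have h2 := Convex.norm_image_sub_le_of_norm_deriv_le (f := iteratedDeriv m g) (C := B)
        (s := univ) (fun z _ => hd z) (fun z _ => by
          rw [← iteratedDeriv_succ]; exact h1 z) convex_univ (mem_univ (x/ν)) (mem_univ y)
    rw [Real.norm_eq_abs, Real.norm_eq_abs] at h2
    have h3 : |y - x/ν| ≤ a / (2*B) := by
      have e1 : x / ν - y ≤ a / (2*B) := by
        have : x / ν ≤ (ν*y+h)/ν := div_le_div_of_nonneg_right hx.2 hν.le
        have e : (ν*y+h)/ν = y + a/(2*B) := by rw [hh]; field_simp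
        linarith
      have e2 : 0 ≤ x / ν - y := by
        have : (ν*y)/ν ≤ x / ν := div_le_div_of_nonneg_right hx.1 hν.le
        rw [mul_div_cancel_left₀ _ hν.ne'] at this
        linarith
      rw [abs_sub_comm, abs_of_nonneg e2]; exact e1
    have h4 : B * |y - x/ν| ≤ a / 2 := by
      calc _ ≤ B * (a / (2*B)) := mul_le_mul_of_nonneg_left h3 hB.le
        _ = a / 2 := by field_simp
    have h5 := abs_sub_abs_le_abs_sub (iteratedDeriv m g y) (iteratedDeriv m g (x/ν))
    have h6 : a / 2 ≤ |iteratedDeriv m g (x/ν)| := by linarith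
    rw [hgm, mul_div_cancel₀ _ hν.ne', abs_mul, abs_of_pos (pow_pos hν m)] at h6
    rw [inv_mul_le_iff₀ (pow_pos hν m)]
    exact h6
  have hIlow : h * ((ν^m)⁻¹ * (a/2)) ^ q ≤ I := by
    rw [hIs]
    have i1 : ∫ x in (ν*y)..(ν*y+h), ((ν^m)⁻¹ * (a/2)) ^ q
        ≤ ∫ x in (ν*y)..(ν*y+h), |iteratedDeriv m v x| ^ q :=
      intervalIntegral.integral_mono_on (by linarith) intervalIntegrable_const
        (hcq.intervalIntegrable _ _) hlow
    rw [intervalIntegral.integral_const, smul_eq_mul, add_sub_cancel_left] at i1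
    refine i1.trans ?_
    apply intervalIntegral.integral_mono_interval le_rfl (by linarith) (by linarith)
    · exact Filter.Eventually.of_forall fun x => Real.rpow_nonneg (abs_nonneg _) _
    · exact hcq.intervalIntegrable _ _
  set N := ν ^ ((m:ℝ) - q⁻¹) * I ^ q⁻¹ with hN
  have hN0 : 0 ≤ N := by positivity
  have hNq : N ^ q = (ν^m)^q * ν⁻¹ * I := by
    rw [hN, Real.mul_rpow (by positivity) (by positivity), ← Real.rpow_mul hν.le,
      ← Real.rpow_mul hI0, inv_mul_cancel₀ hq.ne', Real.rpow_one, sub_mul, inv_mul_cancel₀ hq.ne',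
      Real.rpow_sub hν, Real.rpow_one, Real.rpow_mul hν.le, Real.rpow_natCast]
    rfl
  have key : a ^ (q+1) ≤ (2 * B * 2 ^ q) * N ^ q := by
    rw [hNq]
    rw [Real.mul_rpow (by positivity) (by positivity), Real.div_rpow ha0 (by norm_num),
      Real.inv_rpow (by positivity)] at hIlow
    have e : a ^ (q+1) = (2 * B * 2^q) * ((ν^m)^q * ν⁻¹ *
        (h * (((ν^m)^q)⁻¹ * (a^q / 2^q)))) := by
      rw [Real.rpow_add_one' ha0 (by positivity), hh]
      have : (ν^m)^q ≠ 0 := by positivity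
      have : (2:ℝ)^q ≠ 0 := by positivity
      field_simp
    rw [e]
    gcongr
  have := Real.rpow_le_rpow (by positivity) key (z := 1/(q+1)) (by positivity)
  rw [← Real.rpow_mul ha0, mul_one_div_cancel (by positivity), Real.rpow_one,
    Real.mul_rpow (by positivity) (by positivity), ← Real.rpow_mul hN0, mul_one_div] at this
  exact this

/-! ### Part K: assembly -/

lemma dis_le_sup {f : ℝ → ℝ} {σ ν D S t : ℝ} {u : ℝ → ℝ → ℝ} (h : IsBurgersSolution f σ ν u)
    (hD : burgersD u = D) (ht : 0 ≤ t) (hS : ∀ y, |deriv (fun y => u t (ν * y)) y| ≤ S) :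
    disQ ν u t ≤ 2 * D * S := by
  have hν := h.hν
  have hS0 : 0 ≤ S := (abs_nonneg _).trans (hS 0)
  have hS1 : ∀ x, ν * |deriv (u t) x| ≤ S := by
    intro x
    have h1 := hS (x/ν)
    have e : deriv (fun y => u t (ν * y)) (x/ν) = ν * deriv (u t) x := by
      rw [deriv_comp_mul_left, mul_div_cancel₀ _ hν.ne']; rfl
    rwa [e, abs_mul, abs_of_pos hν] at h1
  have hc : Continuous (deriv (u t)) := (smooth_deriv (h.slice ht)).continuous
  unfold disQ
  rw [← intervalIntegral.integral_const_mul, intervalIntegral.integral_of_le zero_le_one]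
  have h1 : ∫ x in Ioc (0:ℝ) 1, ν * (dX u t x)^2 ≤ ∫ x in Ioc (0:ℝ) 1, S * |deriv (u t) x| := by
    refine integral_mono (integrableOn_unit ?_) (integrableOn_unit (by fun_prop)) ?_
    · show Continuous (fun x => ν * (deriv (u t) x)^2)
      fun_prop
    · intro x
      show ν * (deriv (u t) x)^2 ≤ S * |deriv (u t) x|
      rw [← sq_abs]
      have := mul_le_mul_of_nonneg_right (hS1 x) (abs_nonneg (deriv (u t) x))
      linarith
  refine h1.trans ?_
  rw [integral_const_mul]
  have := mul_le_mul_of_nonneg_left (h.ux_l1 hD ht) hS0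
  linarith

lemma lower_m {f : ℝ → ℝ} (hf : ContDiff ℝ (⊤ : ℕ∞) f) {D : ℝ} (hD0 : 0 < D) {τ : ℝ} (hτ : 0 < τ)
    (m : ℕ) (hm : 1 ≤ m) (p : ℝ≥0∞) (hp1 : 1 ≤ p) :
    ∃ K K' κ : ℝ, 0 < K ∧ 0 < K' ∧ 0 < κ ∧ ∀ (σ ν : ℝ) (u : ℝ → ℝ → ℝ),
      IsBurgersSolution f σ ν u → ν ≤ 1 → burgersD u = D → ∀ t, τ ≤ t →
        disQ ν u t ≤ K ∧
        disQ ν u t ≤ K' * (ν ^ ((m : ℝ) - (1 / p).toReal) * sobLp m p (u t)) ^ κ := by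
  obtain ⟨K, hK0, hK⟩ := deriv_bounds hf D hτ
  obtain ⟨n, rfl⟩ : ∃ n, m = n + 1 := ⟨m - 1, by omega⟩
  obtain ⟨C1, hC1, hL⟩ := landau_iter K hK0 n
  set B := K (n+1) + K (n+1+1) + 1 with hB
  have hB0 : 0 < B := by have := hK0 (n+1); have := hK0 (n+1+1); positivity
  obtain ⟨C2, κ2, hC2, hκ2, hP⟩ : ∃ C2 κ2 : ℝ, 0 ≤ C2 ∧ 0 < κ2 ∧ ∀ (σ ν : ℝ) (u : ℝ → ℝ → ℝ),
      IsBurgersSolution f σ ν u → ν ≤ 1 → burgersD u = D → ∀ t, τ ≤ t → ∀ y,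
      |iteratedDeriv (n+1) (fun y => u t (ν * y)) y|
        ≤ C2 * (ν ^ (((n+1:ℕ) : ℝ) - (1 / p).toReal) * sobLp (n+1) p (u t)) ^ κ2 := by
    by_cases hpt : p = ⊤
    · subst hpt
      refine ⟨1, 1, zero_le_one, zero_lt_one, ?_⟩
      intro σ ν u h hν hD t ht y
      have hs := h.slice (hτ.le.trans ht)
      rw [one_div, ENNReal.inv_top, ENNReal.toReal_zero, sub_zero, Real.rpow_natCast,
        Real.rpow_one, one_mul, rescale_iter hs, abs_mul, abs_of_pos (pow_pos h.hν _)]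
      exact mul_le_mul_of_nonneg_left
        (le_sobLp_top (smooth_iteratedDeriv hs _).continuous (h.hper t) _) (pow_pos h.hν _).le
    · have hq : 0 < p.toReal := ENNReal.toReal_pos (zero_lt_one.trans_le hp1).ne' hpt
      refine ⟨(2 * B * 2 ^ p.toReal) ^ (1 / (p.toReal + 1)), p.toReal / (p.toReal + 1),
        by positivity, by positivity, ?_⟩
      intro σ ν u h hν hD t ht y
      have hs := h.slice (hτ.le.trans ht)
      refine lp_lower hs (h.hper t) hp1 hpt h.hν hν hB0 (fun y => ?_) (fun y => ?_) y
      · exact (hK σ ν u h hν hD t ht (n+1) y).trans (by linarith [hK0 (n+1+1)])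
      · exact (hK σ ν u h hν hD t ht (n+1+1) y).trans (by linarith [hK0 (n+1)])
  refine ⟨2 * D * K 1 + 1, 2 * D * (C1 * C2 ^ ((1/2:ℝ)^n)) + 1, κ2 * (1/2:ℝ)^n,
    by have := hK0 1; positivity, by positivity, by positivity, ?_⟩
  intro σ ν u h hν hD t ht
  have ht0 := hτ.le.trans ht
  have hs := h.slice ht0
  have hgs : ContDiff ℝ (⊤ : ℕ∞) (fun y => u t (ν * y)) := hs.comp (by fun_prop)
  have hb := hK σ ν u h hν hD t ht
  constructor
  · have := dis_le_sup h hD ht0 (S := K 1) (fun y => by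
      have := hb 1 y
      rwa [iteratedDeriv_one] at this)
    linarith
  · set N := ν ^ (((n+1:ℕ) : ℝ) - (1 / p).toReal) * sobLp (n+1) p (u t) with hN
    have hN0 : 0 ≤ N := mul_nonneg (Real.rpow_nonneg h.hν.le _) (sobLp_nonneg _ _ _)
    have h1 := hL _ hgs hb (C2 * N ^ κ2) (hP σ ν u h hν hD t ht)
    rw [Real.mul_rpow hC2 (by positivity), ← Real.rpow_mul hN0] at h1
    have h2 := dis_le_sup h hD ht0 h1
    have h3 : 0 ≤ N ^ (κ2 * (1/2:ℝ)^n) := by positivity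
    linarith

lemma sobLp_one_le {v : ℝ → ℝ} (hv : Continuous v) (hper : ∀ x, v (x+1) = v x) {p : ℝ≥0∞}
    (hp : 1 ≤ p) : sobLp 0 1 v ≤ sobLp 0 p v := by
  unfold sobLp
  rw [iteratedDeriv_zero]
  exact ENNReal.toReal_mono (eLpNorm_unit_ne_top hv hper p)
    (eLpNorm_le_eLpNorm_of_exponent_le hp hv.aestronglyMeasurable)

lemma enE_le {f : ℝ → ℝ} {σ ν D t : ℝ} {u : ℝ → ℝ → ℝ} (h : IsBurgersSolution f σ ν u)
    (hD : burgersD u = D) (ht : 0 ≤ t) {p : ℝ≥0∞} (hp : 1 ≤ p) :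
    enE u t ≤ D * sobLp 0 p (u t) ∧ enE u t ≤ D^2 := by
  have hc : Continuous (u t) := (h.slice ht).continuous
  have hDp := h.D_pos hD
  have h1 := sobLp_one_le hc (h.hper t) hp
  constructor
  · refine le_trans ?_ (mul_le_mul_of_nonneg_left h1 hDp.le)
    rw [sobLp_one (by simpa using hc)]
    unfold enE
    rw [intervalIntegral.integral_of_le zero_le_one, ← integral_const_mul]
    refine integral_mono (integrableOn_unit (by fun_prop)) (integrableOn_unit ?_) ?_
    · simp only [iteratedDeriv_zero]; fun_prop
    · intro x
      simp only [iteratedDeriv_zero]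
      rw [← sq_abs]
      have := h.u_bound hD ht x
      nlinarith [abs_nonneg (u t x)]
  · unfold enE
    calc _ ≤ ∫ x in (0:ℝ)..1, D^2 := by
          apply intervalIntegral.integral_mono_on zero_le_one
          · exact Continuous.intervalIntegrable (by fun_prop) _ _
          · exact intervalIntegrable_const
          · intro x _
            rw [← sq_abs]
            exact pow_le_pow_left₀ (abs_nonneg _) (h.u_bound hD ht x) 2
      _ = _ := by simp

lemma main_lower {f : ℝ → ℝ} (hf : ContDiff ℝ (⊤ : ℕ∞) f) {σ D Ct : ℝ} (hD0 : 0 < D)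
    (hCt : 0 < Ct)
    (hCtb : ∀ ν, 0 < ν → ν ≤ 1 →
      ∀ u : ℝ → ℝ → ℝ, IsBurgersSolution f σ ν u → burgersD u = D →
        ∀ t, 0 ≤ t → sobLp 1 2 (u t) ^ 2 ≤ Ct * ν⁻¹)
    (m : ℕ) (p : ℝ≥0∞) (hp1 : 1 ≤ p) (α : ℝ) (hα : 0 < α) :
    ∃ c > 0, ∀ ν, 0 < ν → ν ≤ 1 →
      ∀ u : ℝ → ℝ → ℝ, IsBurgersSolution f σ ν u → burgersD u = D →
        c * ν ^ (-(max 0 ((m : ℝ) - (1 / p).toReal)))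
          ≤ (timeAvg (burgersT₁ D Ct) (burgersT₂ σ D Ct)
              (fun t => sobLp m p (u t) ^ α)) ^ (1 / α) := by
  have hT1 := IsBurgersSolution.T1_pos hD0 hCt
  set T1 := burgersT₁ D Ct with hT1d
  have hT2 : 3/2 * T1 ≤ burgersT₂ σ D Ct := le_max_left _ _
  have hT12 : T1 < burgersT₂ σ D Ct := by linarith
  set T2 := burgersT₂ σ D Ct with hT2d
  have hsub0 : Icc T1 T2 ⊆ Ioi 0 := fun x hx => hT1.trans_le hx.1
  have hsub1 : Icc T1 T2 ⊆ Ici 0 := fun x hx => hT1.le.trans hx.1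
  rcases Nat.eq_zero_or_pos m with rfl | hm
  · have h0 : max 0 (((0:ℕ):ℝ) - (1/p).toReal) = 0 := by
      have : 0 ≤ (1/p).toReal := ENNReal.toReal_nonneg
      rw [max_eq_left]; push_cast; linarith
    rw [h0]
    obtain ⟨c, hc, hA⟩ := avg_lower (K := D^2) (K' := D) (c0 := (D^2)⁻¹ / 4 * (T1/2)) (κ := 1)
      hT12 hα (by positivity) hD0 (by positivity) one_pos
    refine ⟨c, hc, ?_⟩
    intro ν hν hν1 u h hD
    rw [neg_zero, Real.rpow_zero, mul_one]
    refine hA (fun t => sobLp 0 p (u t)) (enE u) (fun _ _ => sobLp_nonneg _ _ _)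
      ((sobLp_cont h.smoothPos h.hper 0 hp1).mono hsub0) (h.enE_cont.mono hsub1)
      (fun t ht => (enE_le h hD (hsub1 ht) hp1).2)
      (fun t ht => by rw [Real.rpow_one]; exact (enE_le h hD (hsub1 ht) hp1).1) ?_
    have h1 : ∫ t in T1..(3/2*T1), (D^2)⁻¹/4 ≤ ∫ t in T1..(3/2*T1), enE u t := by
      apply intervalIntegral.integral_mono_on (by linarith) intervalIntegrable_const
      · apply ContinuousOn.intervalIntegrable
        rw [uIcc_of_le (by linarith)]
        exact h.enE_cont.mono (fun x hx => hT1.le.trans hx.1)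
      · intro t ht
        exact h.enE_mid hD hCt (hCtb ν hν hν1 u h hD) (hT1.le.trans ht.1) ht.2
    rw [intervalIntegral.integral_const, smul_eq_mul] at h1
    have h2 : ∫ t in T1..(3/2*T1), enE u t ≤ ∫ t in T1..T2, enE u t := by
      apply intervalIntegral.integral_mono_interval le_rfl (by linarith) hT2
      · exact Filter.Eventually.of_forall fun x =>
          intervalIntegral.integral_nonneg zero_le_one fun _ _ => sq_nonneg _
      · apply ContinuousOn.intervalIntegrable
        rw [uIcc_of_le hT12.le]
        exact h.enE_cont.mono hsub1
    linarith
  · have hm1 : (1:ℝ) ≤ m := by exact_mod_cast hm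
    have hinvle : (1/p).toReal ≤ 1 := by
      have : 1/p ≤ 1 := by rw [one_div]; exact ENNReal.inv_le_one.2 hp1
      exact ENNReal.toReal_le_of_le_ofReal zero_le_one (by simpa using this)
    rw [max_eq_right (by linarith)]
    set γ := (m:ℝ) - (1/p).toReal with hγ
    obtain ⟨K, K', κ, hK, hK', hκ, hL⟩ := lower_m hf hD0 hT1 m hm p hp1
    obtain ⟨c, hc, hA⟩ := avg_lower (K := K) (K' := K') (c0 := (D^2)⁻¹ / 8) (κ := κ)
      hT12 hα hK hK' (by positivity) hκ
    refine ⟨c, hc, ?_⟩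
    intro ν hν hν1 u h hD
    have h1 := hA (fun t => ν^γ * sobLp m p (u t)) (disQ ν u)
      (fun _ _ => mul_nonneg (Real.rpow_nonneg hν.le _) (sobLp_nonneg _ _ _))
      (continuousOn_const.mul ((sobLp_cont h.smoothPos h.hper m hp1).mono hsub0))
      (h.disQ_cont.mono hsub1)
      (fun t ht => (hL σ ν u h hν1 hD t ht.1).1)
      (fun t ht => (hL σ ν u h hν1 hD t ht.1).2)
      (h.dis_lower hD hCt (hCtb ν hν hν1 u h hD))
    rw [avg_scale hT12 hα (Real.rpow_nonneg hν.le _) (fun t => sobLp_nonneg _ _ _)] at h1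
    rw [Real.rpow_neg hν.le, ← div_eq_mul_inv, div_le_iff₀ (Real.rpow_pos_of_pos hν _)]
    linarith

/-- For `m ∈ {0,1}`, `p ∈ [1,∞]` or `m ≥ 2`, `p ∈ (1,∞]`, and
`α > 0`, with `γ = max(0, m - 1/p)`, there are `c, C > 0` depending only on
`f`, `D`, `m`, `p`, `α` such that for every `ν ∈ (0,1]`,
`c ν^{-γ} ≤ {|u(t)|_{m,p}^α}^{1/α} ≤ C ν^{-γ}`. -/
theorem statement12 (f : ℝ → ℝ) (σ D Ct : ℝ) (hCt : 0 < Ct)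
    (hCtb : ∀ ν, 0 < ν → ν ≤ 1 →
      ∀ u : ℝ → ℝ → ℝ, IsBurgersSolution f σ ν u → burgersD u = D →
        ∀ t, 0 ≤ t → sobLp 1 2 (u t) ^ 2 ≤ Ct * ν⁻¹)
    (m : ℕ) (p : ℝ≥0∞) (hmp : (m ≤ 1 ∧ 1 ≤ p) ∨ (2 ≤ m ∧ 1 < p))
    (α : ℝ) (hα : 0 < α) :
    ∃ c > 0, ∃ C > 0, ∀ ν, 0 < ν → ν ≤ 1 →
      ∀ u : ℝ → ℝ → ℝ, IsBurgersSolution f σ ν u → burgersD u = D →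
        c * ν ^ (-(max 0 ((m : ℝ) - (1 / p).toReal)))
          ≤ (timeAvg (burgersT₁ D Ct) (burgersT₂ σ D Ct)
              (fun t => sobLp m p (u t) ^ α)) ^ (1 / α) ∧
        (timeAvg (burgersT₁ D Ct) (burgersT₂ σ D Ct)
              (fun t => sobLp m p (u t) ^ α)) ^ (1 / α)
          ≤ C * ν ^ (-(max 0 ((m : ℝ) - (1 / p).toReal))) := by
  have hp1 : 1 ≤ p := by rcases hmp with h | h; exacts [h.2, h.2.le]
  by_cases hex : ∃ ν u, IsBurgersSolution f σ ν u ∧ burgersD u = D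
  · obtain ⟨ν0, u0, hs0, hDs0⟩ := hex
    have hf := hs0.hf
    have hD0 := hs0.D_pos hDs0
    have hT1 := IsBurgersSolution.T1_pos hD0 hCt
    have hT2 : 3/2 * burgersT₁ D Ct ≤ burgersT₂ σ D Ct := le_max_left _ _
    have hT12 : burgersT₁ D Ct < burgersT₂ σ D Ct := by linarith
    obtain ⟨c, hc, hlow⟩ := main_lower hf hD0 hCt hCtb m p hp1 α hα
    obtain ⟨C, hC, hup⟩ := upper_bound hf D hT1 m p hmp
    refine ⟨c, hc, C, hC, ?_⟩
    intro ν hν hν1 u h hD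
    refine ⟨hlow ν hν hν1 u h hD, ?_⟩
    refine avg_upper hT12 hα (mul_nonneg hC.le (Real.rpow_nonneg hν.le _))
      (fun _ _ => sobLp_nonneg _ _ _)
      ((sobLp_cont h.smoothPos h.hper m hp1).mono (fun x hx => hT1.trans_le hx.1)) ?_
    intro t ht
    exact hup σ ν u h hν1 hD t ht.1
  · exact ⟨1, one_pos, 1, one_pos, fun ν _ _ u h hD => absurd ⟨ν, u, h, hD⟩ hex⟩
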